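/- arXiv:1810.10849 — 4 statements merged into one kernel-verified Lean document; each statement's English description precedes it below -/
import Mathlib

section
/- There is a constant C = C(d) > 0, depending only on the dimension d, with the following property: for every u₀ ∈ L²(ℝ^d), every T > 0 and every N > 0, there exists R ∈ L²(ℝ^d) with ‖R‖ ≤ C (1 + (TN²)^{-d/4}) e^{-TN²} ‖u₀‖ such that the family (u(T, n/N)·f_{N,n})_{n∈ℤ^d} is summable in L²(ℝ^d) and u(T,·) = Σ_{n∈ℤ^d} u(T, n/N) f_{N,n} + R in L²(ℝ^d), where u is the heat solution with initial datum u₀. -/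
open MeasureTheory Filter Topology Metric ENNReal NNReal

noncomputable section

/-- `sinc` with value 1 at 0. -/
def sinc' (x : ℝ) : ℝ := if x = 0 then 1 else Real.sin x / x

/-- The function `f_{N,n}(x) = ∏_j sin (π (N x_j - n_j)) / (π (N x_j - n_j))`. -/
def fN (d : ℕ) (N : ℝ) (n : Fin d → ℤ) (x : EuclideanSpace ℝ (Fin d)) : ℝ :=
  ∏ j, sinc' (Real.pi * (N * x j - n j))

/-- The lattice point `n / N` in `ℝ^d`. -/
def latticePt (d : ℕ) (N : ℝ) (n : Fin d → ℤ) : EuclideanSpace ℝ (Fin d) :=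
  WithLp.toLp 2 fun j => (n j : ℝ) / N

/-- The heat solution at time `t > 0` with initial datum `u₀ ∈ L²(ℝ^d)`:
`u(t,x) = (4πt)^{-d/2} ∫ e^{-|x-y|²/(4t)} u₀(y) dy`. -/
def heatSol (d : ℕ) (u₀ : EuclideanSpace ℝ (Fin d) → ℝ) (t : ℝ)
    (x : EuclideanSpace ℝ (Fin d)) : ℝ :=
  (4 * Real.pi * t) ^ (-(d : ℝ) / 2) * ∫ y, Real.exp (-‖x - y‖ ^ 2 / (4 * t)) * u₀ y

/-- The family `F` is summable in `L²(ℝ^d)` with sum `g`: the finite partial sums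
converge to `g` in the `L²` norm along the filter of finite subsets of `ℤ^d`. -/
def HasSumL2 (d : ℕ) {V : Type} [NormedAddCommGroup V]
    (F : (Fin d → ℤ) → EuclideanSpace ℝ (Fin d) → V)
    (g : EuclideanSpace ℝ (Fin d) → V) : Prop :=
  Tendsto (fun s : Finset (Fin d → ℤ) =>
    eLpNorm (fun x => g x - ∑ n ∈ s, F n x) 2 volume) atTop (𝓝 0)

/-- The closed cube `Q_r(0)` in `ℝ^d`, centered at the origin, of side length `2r`. -/
def Qcube (d : ℕ) (r : ℝ) : Set (EuclideanSpace ℝ (Fin d)) := {ξ | ∀ j, |ξ j| ≤ r}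

/-- The truncated Fourier integral, with the paper's normalization
`(2π)^{-d/2} ∫_{|x| ≤ R} e^{-i x·ξ} f(x) dx`. -/
def truncFT (d : ℕ) (f : EuclideanSpace ℝ (Fin d) → ℂ) (R : ℝ)
    (ξ : EuclideanSpace ℝ (Fin d)) : ℂ :=
  (((2 * Real.pi) ^ (-(d : ℝ) / 2) : ℝ) : ℂ) *
    ∫ x in closedBall (0 : EuclideanSpace ℝ (Fin d)) R,
      Complex.exp (-(Complex.I * ((inner ℝ x ξ : ℝ) : ℂ))) * f x

/-- `fhat` is the Fourier transform of `f ∈ L²(ℝ^d)` in the `L²` (Plancherel) sense: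
`fhat ∈ L²` and the Fourier integrals of the truncations of `f` converge to `fhat`
in the `L²` norm. -/
def IsL2Fourier (d : ℕ) (f fhat : EuclideanSpace ℝ (Fin d) → ℂ) : Prop :=
  MemLp fhat 2 volume ∧
    Tendsto (fun R : ℝ => eLpNorm (fun ξ => fhat ξ - truncFT d f R ξ) 2 volume)
      atTop (𝓝 0)

/-- The `L²(ℝ^d)` norm of a function, as a real number. -/
def l2norm (d : ℕ) {V : Type} [NormedAddCommGroup V]
    (f : EuclideanSpace ℝ (Fin d) → V) : ℝ :=
  (eLpNorm f 2 volume).toReal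


section Four
open FourierTransform

variable {V : Type*} [NormedAddCommGroup V] [InnerProductSpace ℝ V] [FiniteDimensional ℝ V]
  [MeasurableSpace V] [BorelSpace V]

lemma aux_fourierInv_selfadj {f g : V → ℂ} (hf : Integrable f) (hg : Integrable g) :
    ∫ x, (𝓕⁻ f x) * g x = ∫ x, f x * (𝓕⁻ g x) := by
  have h := VectorFourier.integral_fourierIntegral_smul_eq_flip (e := Real.fourierChar)
    (L := -innerₗ V) (μ := volume) (ν := volume) (f := f) (g := g) Real.continuous_fourierChar
    (by simp only [LinearMap.neg_apply, innerₗ_apply_apply]; fun_prop) hf hg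
  have hflip : (-innerₗ V).flip = -innerₗ V := by
    ext x y; simp [real_inner_comm]
  rw [hflip] at h
  exact h

lemma aux_fourierInv_cont {f : V → ℂ} (hf : Integrable f) : Continuous (𝓕⁻ f) := by
  have := VectorFourier.fourierIntegral_continuous (e := Real.fourierChar)
    (L := -innerₗ V) (μ := volume) (f := f) Real.continuous_fourierChar
    (by simp only [LinearMap.neg_apply, innerₗ_apply_apply]; fun_prop) hf
  exact this

lemma aux_inv_test {f : V → ℂ} (hf : Integrable f) (hf2 : MemLp f 2 volume)
    (W : Lp ℂ 2 (volume : Measure V)) (hW : 𝓕⁻ (hf2.toLp f) = W) (φ : SchwartzMap V ℂ) :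
    ∫ x, φ x • (W : V → ℂ) x = ∫ x, φ x * 𝓕⁻ f x := by
  have h := Lp.fourierInv_toTemperedDistribution_eq (hf2.toLp f)
  rw [hW] at h
  rw [← Lp.toTemperedDistribution_apply, ← h, TemperedDistribution.fourierInv_apply,
    Lp.toTemperedDistribution_apply, ← aux_fourierInv_selfadj φ.integrable hf,
    ← SchwartzMap.fourierInv_coe]
  apply integral_congr_ae
  filter_upwards [hf2.coeFn_toLp] with x hx
  rw [hx, smul_eq_mul]

lemma aux_inv {f : V → ℂ} (hf : Integrable f) (hf2 : MemLp f 2 volume)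
    (W : Lp ℂ 2 (volume : Measure V)) (hW : 𝓕⁻ (hf2.toLp f) = W) :
    (W : V → ℂ) =ᵐ[volume] 𝓕⁻ f := by
  apply ae_eq_of_integral_contDiff_smul_eq
  · exact (Lp.memLp _).locallyIntegrable (by norm_num)
  · exact (aux_fourierInv_cont hf).locallyIntegrable
  intro g hg hgs
  obtain ⟨φ, hφ⟩ : ∃ φ : SchwartzMap V ℂ, ∀ x, φ x = (g x : ℂ) := by
    have hgs' : HasCompactSupport (Complex.ofReal ∘ g) :=
      HasCompactSupport.comp_left hgs Complex.ofReal_zero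
    have hg' : ContDiff ℝ (⊤ : ℕ∞) (Complex.ofReal ∘ g) :=
      Complex.ofRealCLM.contDiff.comp hg
    exact ⟨hgs'.toSchwartzMap hg', fun x => rfl⟩
  have h := aux_inv_test hf hf2 W hW φ
  simpa [hφ] using h

lemma aux_planch {f : V → ℂ} (hf : Integrable f) (hf2 : MemLp f 2 volume) :
    eLpNorm (𝓕⁻ f) 2 volume = eLpNorm f 2 volume := by
  rw [← eLpNorm_congr_ae (aux_inv hf hf2 _ rfl), ← eLpNorm_congr_ae hf2.coeFn_toLp]
  have h := (Lp.fourierTransformₗᵢ V ℂ).symm.norm_map (hf2.toLp f)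
  rw [Lp.norm_def, Lp.norm_def] at h
  exact (ENNReal.toReal_eq_toReal_iff' (Lp.eLpNorm_ne_top _) (Lp.eLpNorm_ne_top _)).1 h

/-- Gaussian. -/
lemma aux_gauss {T : ℝ} (hT : 0 < T) (x y : V) :
    𝓕⁻ (fun ξ : V => Complex.exp (-(4 * Real.pi ^ 2 * T : ℝ) * (‖ξ‖ : ℂ) ^ 2
        + 2 * Real.pi * Complex.I * (inner ℝ (-x) ξ : ℝ))) y =
      (((4 * Real.pi * T) ^ (-(Module.finrank ℝ V : ℝ) / 2) *
        Real.exp (-‖x - y‖ ^ 2 / (4 * T)) : ℝ) : ℂ) := by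
  rw [Real.fourierInv_eq_fourier_neg]
  have hpi := Real.pi_pos
  have hb : 0 < ((4 * Real.pi ^ 2 * T : ℝ) : ℂ).re := by
    rw [Complex.ofReal_re]; positivity
  rw [fourier_gaussian_innerProductSpace' hb]
  have e1 : ((Real.pi : ℂ) / ((4 * Real.pi ^ 2 * T : ℝ) : ℂ)) = (((4 * Real.pi * T)⁻¹ : ℝ) : ℂ) := by
    rw [← Complex.ofReal_div]; congr 1; field_simp
  have e2 : ((Module.finrank ℝ V : ℂ) / 2) = (((Module.finrank ℝ V : ℝ) / 2 : ℝ) : ℂ) := by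
    push_cast; rfl
  have e3 : -x - -y = -(x - y) := by abel
  rw [e1, e2, ← Complex.ofReal_cpow (by positivity), e3, norm_neg, Complex.ofReal_mul
    ((4 * Real.pi * T) ^ (-(Module.finrank ℝ V : ℝ) / 2)), Complex.ofReal_exp, Real.inv_rpow (by positivity), ← Real.rpow_neg (by positivity), neg_div]
  congr 2
  push_cast
  have : (Real.pi : ℂ) ≠ 0 := by exact_mod_cast hpi.ne'
  have : (T : ℂ) ≠ 0 := by exact_mod_cast hT.ne'
  field_simp

end Four

section Heat
open FourierTransform

/-- The Fourier multiplier with a phase. -/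
def gmul (d : ℕ) (T : ℝ) (x ξ : EuclideanSpace ℝ (Fin d)) : ℂ :=
  Complex.exp (-(4 * Real.pi ^ 2 * T : ℝ) * (‖ξ‖ : ℂ) ^ 2
        + 2 * Real.pi * Complex.I * (inner ℝ (-x) ξ : ℝ))

lemma gmul_int (d : ℕ) {T : ℝ} (hT : 0 < T) (x : EuclideanSpace ℝ (Fin d)) :
    Integrable (gmul d T x) := by
  have hb : 0 < ((4 * Real.pi ^ 2 * T : ℝ) : ℂ).re := by
    rw [Complex.ofReal_re]; have := Real.pi_pos; positivity
  exact GaussianFourier.integrable_cexp_neg_mul_sq_norm_add hb _ (-x)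

lemma gmul_norm (d : ℕ) (T : ℝ) (x ξ : EuclideanSpace ℝ (Fin d)) :
    ‖gmul d T x ξ‖ = Real.exp (-(4 * Real.pi ^ 2 * T) * ‖ξ‖ ^ 2) := by
  rw [gmul, Complex.norm_exp]
  congr 1
  simp only [Complex.add_re, Complex.mul_re, Complex.mul_im, ← Complex.ofReal_pow, Complex.ofReal_re,
    Complex.ofReal_im, Complex.neg_re, Complex.neg_im, Complex.I_re, Complex.I_im]
  simp

lemma gmul_conj (d : ℕ) (T : ℝ) (x ξ : EuclideanSpace ℝ (Fin d)) :
    (starRingEnd ℂ) (gmul d T x ξ) =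
      Complex.exp (((2 * Real.pi * inner ℝ ξ x : ℝ) : ℂ) * Complex.I) * gmul d T 0 ξ := by
  have h2 : (starRingEnd ℂ) (2 : ℂ) = 2 := Complex.conj_ofNat 2
  rw [gmul, gmul, ← Complex.exp_conj, ← Complex.exp_add]
  congr 1
  simp only [h2, map_add, map_mul, map_neg, map_pow, Complex.conj_ofReal, Complex.conj_I, inner_neg_left,
    real_inner_comm ξ x]
  simp
  ring

lemma gmul_memLp (d : ℕ) {T : ℝ} (hT : 0 < T) (x : EuclideanSpace ℝ (Fin d)) :
    MemLp (gmul d T x) 2 volume := by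
  rw [memLp_two_iff_integrable_sq_norm (gmul_int d hT x).aestronglyMeasurable]
  have h := (gmul_int d (T := 2 * T) (by positivity) x).norm
  refine h.congr (Eventually.of_forall fun ξ => ?_)
  simp only [gmul_norm, ← Real.exp_nat_mul]
  congr 1
  push_cast
  ring

lemma heat_inner (d : ℕ) (u₀ : EuclideanSpace ℝ (Fin d) → ℝ) {T : ℝ} (hT : 0 < T)
    (U V W M : Lp ℂ 2 (volume : Measure (EuclideanSpace ℝ (Fin d))))
    (hU : U =ᵐ[volume] fun y => (u₀ y : ℂ)) (hV : 𝓕⁻ V = U)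
    (x : EuclideanSpace ℝ (Fin d)) (hM : M = (gmul_memLp d hT x).toLp) (hW : 𝓕⁻ M = W) :
    (heatSol d u₀ T x : ℂ) = 𝓕⁻ (fun ξ => gmul d T 0 ξ * V ξ) x := by
  have h1 : inner ℂ W U = inner ℂ M V := by
    rw [← hW, ← hV]
    exact (Lp.fourierTransformₗᵢ (EuclideanSpace ℝ (Fin d)) ℂ).symm.inner_map_map M V
  rw [L2.inner_def, L2.inner_def] at h1
  have hMae : M =ᵐ[volume] gmul d T x := by rw [hM]; exact (gmul_memLp d hT x).coeFn_toLp
  have hWae : W =ᵐ[volume] 𝓕⁻ (gmul d T x) :=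
    aux_inv (gmul_int d hT x) (gmul_memLp d hT x) W (by rw [← hM, hW])
  have e1 : ∫ y, inner ℂ (W y) (U y) = (heatSol d u₀ T x : ℂ) := by
    rw [heatSol, ← integral_const_mul, ← integral_complex_ofReal]
    apply integral_congr_ae
    filter_upwards [hWae, hU] with y h1 h2
    rw [h1, h2]
    have := aux_gauss hT x y
    unfold gmul
    rw [this, RCLike.inner_apply, Complex.conj_ofReal, finrank_euclideanSpace, Fintype.card_fin]
    push_cast
    ring
  rw [← e1, h1, Real.fourierInv_eq']
  apply integral_congr_ae
  filter_upwards [hMae] with ξ hξ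
  rw [hξ, RCLike.inner_apply, gmul_conj, smul_eq_mul]
  ring

lemma heat_repr (d : ℕ) (u₀ : EuclideanSpace ℝ (Fin d) → ℝ) (hu : MemLp u₀ 2 volume) {T : ℝ}
    (hT : 0 < T) : ∃ v : EuclideanSpace ℝ (Fin d) → ℂ, MemLp v 2 volume ∧ 
      eLpNorm v 2 volume = eLpNorm u₀ 2 volume ∧
      ∀ x, (heatSol d u₀ T x : ℂ) = 𝓕⁻ (fun ξ => gmul d T 0 ξ * v ξ) x := by
  have hu' : MemLp (fun y => (u₀ y : ℂ)) 2 volume := hu.ofReal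
  let V : Lp ℂ 2 (volume : Measure (EuclideanSpace ℝ (Fin d))) := 𝓕 hu'.toLp
  refine ⟨V, Lp.memLp _, ?_, fun x => ?_⟩
  · have h := Lp.norm_fourier_eq hu'.toLp
    rw [Lp.norm_def, Lp.norm_def] at h
    have h2 := (ENNReal.toReal_eq_toReal_iff' (Lp.eLpNorm_ne_top _) (Lp.eLpNorm_ne_top _)).1 h
    rw [h2, eLpNorm_congr_ae hu'.coeFn_toLp]
    apply eLpNorm_congr_norm_ae
    simp
  · exact heat_inner d u₀ hT hu'.toLp V _ _ hu'.coeFn_toLp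
      (fourierInv_fourier_eq _) x rfl rfl
end Heat

section Torus
open FourierTransform

/-- Normalised Haar measure on the circle. -/
local instance instMSCircle : MeasureSpace UnitAddCircle := ⟨AddCircle.haarAddCircle⟩

local instance instHaarCircle : Measure.IsAddHaarMeasure (volume : Measure UnitAddCircle) :=
  inferInstanceAs (Measure.IsAddHaarMeasure AddCircle.haarAddCircle)

local instance instProbCircle : IsProbabilityMeasure (volume : Measure UnitAddCircle) :=
  inferInstanceAs (IsProbabilityMeasure AddCircle.haarAddCircle)

/-- integer point -/
def latt (d : ℕ) (k : Fin d → ℤ) : EuclideanSpace ℝ (Fin d) :=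
  WithLp.toLp 2 fun j => (k j : ℝ)

/-- unit cube around `k` -/
def Qk (d : ℕ) (k : Fin d → ℤ) : Set (EuclideanSpace ℝ (Fin d)) :=
  {ξ | ∀ j, ξ j - k j ∈ Set.Ioc (-1 / 2 : ℝ) (-1 / 2 + 1)}

/-- projection to the torus -/
def tor (d : ℕ) (ξ : EuclideanSpace ℝ (Fin d)) : UnitAddTorus (Fin d) :=
  fun j => (ξ j : UnitAddCircle)

/-- section -/
def rho (d : ℕ) (k : Fin d → ℤ) (t : UnitAddTorus (Fin d)) : EuclideanSpace ℝ (Fin d) :=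
  WithLp.toLp 2 (fun j => (AddCircle.equivIoc 1 (-1 / 2) (t j) : ℝ)) + latt d k

lemma Qk_meas (d : ℕ) (k : Fin d → ℤ) : MeasurableSet (Qk d k) := by
  have : Qk d k = ⋂ j, (fun ξ : EuclideanSpace ℝ (Fin d) => ξ j - k j) ⁻¹'
      (Set.Ioc (-1 / 2 : ℝ) (-1 / 2 + 1)) := by
    ext; simp [Qk]
  rw [this]
  exact MeasurableSet.iInter fun j => measurableSet_Ioc.preimage (by fun_prop)

lemma Qk_disj (d : ℕ) : Pairwise (Function.onFun Disjoint (Qk d)) := by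
  intro k l hkl
  rw [Function.onFun, Set.disjoint_left]
  intro ξ h1 h2
  apply hkl
  ext j
  have a := h1 j
  have b := h2 j
  simp only [Set.mem_Ioc] at a b
  have c1 : (k j : ℝ) < l j + 1 := by linarith
  have c2 : (l j : ℝ) < k j + 1 := by linarith
  have c1' : k j < l j + 1 := by exact_mod_cast c1
  have c2' : l j < k j + 1 := by exact_mod_cast c2
  omega

lemma Qk_cover (d : ℕ) : (⋃ k, Qk d k) = Set.univ := by
  rw [Set.eq_univ_iff_forall]
  intro ξ
  refine Set.mem_iUnion.2 ⟨fun j => ⌈ξ j - 1 / 2⌉, fun j => ?_⟩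
  have a := Int.le_ceil (ξ j - 1 / 2)
  have b := Int.ceil_lt_add_one (ξ j - 1 / 2)
  constructor <;> linarith

lemma tor_meas (d : ℕ) : Measurable (tor d) := by
  refine measurable_pi_lambda _ fun j => ?_
  exact AddCircle.measurable_mk'.comp (by fun_prop)

lemma tor_mp (d : ℕ) : MeasurePreserving (tor d) (volume.restrict (Qk d 0)) volume := by
  have h1 := measurePreserving_pi (ι := Fin d) (fun _ => volume.restrict (Set.Ioc (-1 / 2 : ℝ) (-1 / 2 + 1)))
    (fun _ => AddCircle.haarAddCircle) (f := fun _ x => (x : UnitAddCircle)) (fun i => by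
      have := AddCircle.measurePreserving_mk 1 (-1 / 2)
      simpa [volume, AddCircle.haarAddCircle] using this)
  rw [← Measure.restrict_pi_pi] at h1
  have h2 := (PiLp.volume_preserving_ofLp (Fin d)).restrict_preimage
    (s := Set.univ.pi fun _ => Set.Ioc (-1 / 2 : ℝ) (-1 / 2 + 1))
    (MeasurableSet.univ_pi fun _ => measurableSet_Ioc)
  have h3 : (WithLp.ofLp ⁻¹' (Set.univ.pi fun _ => Set.Ioc (-1 / 2 : ℝ) (-1 / 2 + 1)) :
      Set (EuclideanSpace ℝ (Fin d))) = Qk d 0 := by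
    ext ξ; simp [Qk]
  rw [h3] at h2
  exact h1.comp h2

lemma rho_meas (d : ℕ) (k : Fin d → ℤ) : Measurable (rho d k) := by
  refine Measurable.add_const ?_ _
  refine (PiLp.volume_preserving_toLp (Fin d)).measurable.comp ?_
  refine measurable_pi_lambda _ fun j => ?_
  exact measurable_subtype_coe.comp ((AddCircle.measurableEquivIoc 1 (-1 / 2)).measurable.comp
    (measurable_pi_apply j))

lemma tor_rho (d : ℕ) (k : Fin d → ℤ) (t : UnitAddTorus (Fin d)) : tor d (rho d k t) = t := by
  ext j
  have h := AddCircle.coe_equivIoc (p := (1:ℝ)) (a := -1 / 2) (y := t j)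
  have h2 : ((k j : ℝ) : UnitAddCircle) = 0 := by
    have := AddCircle.coe_eq_zero_iff (1 : ℝ) (x := (k j : ℝ))
    rw [this]; exact ⟨k j, by simp⟩
  simp only [tor, rho, latt, PiLp.add_apply, AddCircle.coe_add, h2, add_zero]
  exact h

lemma rho_tor (d : ℕ) (ξ : EuclideanSpace ℝ (Fin d)) (h : ξ ∈ Qk d 0) : rho d 0 (tor d ξ) = ξ := by
  ext j
  have hj := h j
  simp only [Pi.zero_apply, Int.cast_zero, sub_zero] at hj
  have := AddCircle.equivIoc_coe_of_mem (p := (1:ℝ)) (a := -1/2) hj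
  simp only [tor, rho, latt, PiLp.add_apply, Pi.zero_apply, Int.cast_zero, add_zero]
  rw [this]

lemma rho_mp (d : ℕ) (k : Fin d → ℤ) :
    MeasurePreserving (rho d k) volume (volume.restrict (Qk d k)) := by
  have h0 : MeasurePreserving (rho d 0) volume (volume.restrict (Qk d 0)) := by
    refine ⟨rho_meas d 0, ?_⟩
    rw [← (tor_mp d).map_eq, Measure.map_map (rho_meas d 0) (tor_meas d)]
    conv_rhs => rw [← Measure.map_id (μ := volume.restrict (Qk d 0))]
    apply Measure.map_congr
    filter_upwards [ae_restrict_mem (Qk_meas d 0)] with ξ hξ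
    exact rho_tor d ξ hξ
  have h1 := (measurePreserving_add_right (volume : Measure (EuclideanSpace ℝ (Fin d)))
    (latt d k)).restrict_preimage (Qk_meas d k)
  have h2 : (fun x => x + latt d k) ⁻¹' (Qk d k) = Qk d 0 := by
    ext ξ; simp [Qk, latt]
  rw [h2] at h1
  have h3 := h1.comp h0
  convert h3 using 1
  ext t j
  simp [rho, latt]

end Torus

section Series
open FourierTransform UnitAddTorus

attribute [local instance] instMSCircle instHaarCircle instProbCircle

/-- truncated exponential -/
def phi (d : ℕ) (n : Fin d → ℤ) : EuclideanSpace ℝ (Fin d) → ℂ :=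
  (Qk d 0).indicator fun ξ => mFourier (-n) (tor d ξ)

/-- pull back a function on the torus to the cube -/
def cub (d : ℕ) (p : UnitAddTorus (Fin d) → ℂ) : EuclideanSpace ℝ (Fin d) → ℂ :=
  (Qk d 0).indicator fun ξ => p (tor d ξ)

lemma cub_norm (d : ℕ) {p : UnitAddTorus (Fin d) → ℂ} (hp : AEStronglyMeasurable p volume) (q : ℝ≥0∞) :
    eLpNorm (cub d p) q volume = eLpNorm p q volume := by
  rw [cub, eLpNorm_indicator_eq_eLpNorm_restrict (Qk_meas d 0)]
  exact eLpNorm_comp_measurePreserving hp (tor_mp d)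

lemma cub_aesm (d : ℕ) {p : UnitAddTorus (Fin d) → ℂ} (hp : AEStronglyMeasurable p volume) :
    AEStronglyMeasurable (cub d p) volume := by
  rw [cub, aestronglyMeasurable_indicator_iff (Qk_meas d 0)]
  exact hp.comp_measurePreserving (tor_mp d)

lemma cub_memLp (d : ℕ) {p : UnitAddTorus (Fin d) → ℂ} {q : ℝ≥0∞} (hp : MemLp p q volume) :
    MemLp (cub d p) q volume :=
  ⟨cub_aesm d hp.1, by rw [cub_norm d hp.1]; exact hp.2⟩

lemma cub_int (d : ℕ) {p : UnitAddTorus (Fin d) → ℂ} (hp : MemLp p 2 volume) :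
    Integrable (cub d p) := by
  rw [← memLp_one_iff_integrable]
  exact cub_memLp d (hp.mono_exponent (by norm_num))

lemma mF_tor (d : ℕ) (n : Fin d → ℤ) (ξ : EuclideanSpace ℝ (Fin d)) :
    mFourier n (tor d ξ) = Complex.exp (((2 * Real.pi * inner ℝ ξ (latt d n) : ℝ) : ℂ) * Complex.I) := by
  simp only [mFourier, ContinuousMap.coe_mk, tor, fourier_coe_apply, ← Complex.exp_sum]
  congr 1
  simp only [latt, PiLp.inner_apply, Complex.ofReal_mul, Complex.ofReal_sum, Finset.mul_sum,
    Finset.sum_mul]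
  refine Finset.sum_congr rfl fun j _ => ?_
  simp
  ring

lemma rho_memLp (d : ℕ) (k : Fin d → ℤ) {g : EuclideanSpace ℝ (Fin d) → ℂ} (hg : MemLp g 2 volume) :
    MemLp (g ∘ rho d k) 2 volume :=
  (hg.restrict _).comp_measurePreserving (rho_mp d k)

lemma rho_coeff (d : ℕ) (k n : Fin d → ℤ) {g : EuclideanSpace ℝ (Fin d) → ℂ} (hg : Integrable g) :
    mFourierCoeff (g ∘ rho d k) (-n) = ∫ ξ in Qk d k, mFourier n (tor d ξ) • g ξ := by
  rw [mFourierCoeff, ← (rho_mp d k).map_eq, integral_map (rho_meas d k).aemeasurable]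
  · simp [tor_rho]
  · rw [(rho_mp d k).map_eq]
    simp only [smul_eq_mul]
    refine AEStronglyMeasurable.mul ?_ hg.aestronglyMeasurable.restrict
    exact ((mFourier n).continuous.measurable.comp (tor_meas d)).aestronglyMeasurable

lemma coeff_sum (d : ℕ) (n : Fin d → ℤ) {g : EuclideanSpace ℝ (Fin d) → ℂ} (hg : Integrable g) :
    HasSum (fun k => mFourierCoeff (g ∘ rho d k) (-n)) (𝓕⁻ g (latt d n)) := by
  simp only [rho_coeff d _ n hg, Real.fourierInv_eq', ← mF_tor]
  rw [← setIntegral_univ, ← Qk_cover d]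
  refine hasSum_integral_iUnion (Qk_meas d) (Qk_disj d) ?_
  refine Integrable.integrableOn ?_
  refine hg.bdd_mul (c := 1) ?_ ?_
  · exact ((mFourier n).continuous.measurable.comp (tor_meas d)).aestronglyMeasurable
  · refine Eventually.of_forall fun ξ => ?_
    rw [mF_tor, Complex.norm_exp_ofReal_mul_I]

lemma series_main (d : ℕ) {g : EuclideanSpace ℝ (Fin d) → ℂ} (hg : Integrable g)
    (hg2 : MemLp g 2 volume)
    (hs : Summable fun k => (eLpNorm g 2 (volume.restrict (Qk d k))).toReal) :
    ∃ h : EuclideanSpace ℝ (Fin d) → ℂ, Integrable h ∧ MemLp h 2 volume ∧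
      eLpNorm (g - h) 2 volume ≤ eLpNorm g 2 (volume.restrict (Qk d 0)ᶜ) +
        ENNReal.ofReal (∑' k, if k = 0 then 0 else (eLpNorm g 2 (volume.restrict (Qk d k))).toReal) ∧
      Tendsto (fun s : Finset (Fin d → ℤ) =>
        eLpNorm (h - ∑ n ∈ s, 𝓕⁻ g (latt d n) • phi d n) 2 volume) atTop (𝓝 0) := by
  classical
  set P : (Fin d → ℤ) → Lp ℂ 2 (volume : Measure (UnitAddTorus (Fin d))) :=
    fun k => (rho_memLp d k hg2).toLp with hP
  have hPn : ∀ k, ‖P k‖ = (eLpNorm g 2 (volume.restrict (Qk d k))).toReal := by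
    intro k
    rw [hP, Lp.norm_toLp, eLpNorm_comp_measurePreserving hg2.1.restrict (rho_mp d k)]
  have hPs : Summable P := Summable.of_norm (by simpa only [hPn] using hs)
  set p := ∑' k, P k with hp
  set D := ∑' k, (if k = 0 then 0 else P k) with hD
  have hpD : p = P 0 + D := hPs.tsum_eq_add_tsum_ite 0
  have hDn : ‖D‖ ≤ ∑' k, if k = 0 then 0 else (eLpNorm g 2 (volume.restrict (Qk d k))).toReal := by
    have e : (fun k => ‖(if k = 0 then 0 else P k : Lp ℂ 2 (volume : Measure (UnitAddTorus (Fin d))))‖)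
        = fun k => if k = 0 then 0 else (eLpNorm g 2 (volume.restrict (Qk d k))).toReal := by
      ext k; split_ifs <;> simp [hPn]
    rw [← e]
    apply norm_tsum_le_tsum_norm
    rw [e]
    refine hs.of_nonneg_of_le (fun k => ?_) (fun k => ?_)
    · split_ifs <;> positivity
    · split_ifs
      · positivity
      · exact le_rfl
  have hcoef : ∀ n, mFourierCoeff p (-n) = 𝓕⁻ g (latt d n) := by
    intro n
    have h1 : HasSum (fun k => inner ℂ (mFourierBasis (-n)) (P k)) (inner ℂ (mFourierBasis (-n)) p) :=
      hPs.hasSum.mapL (innerSL ℂ (mFourierBasis (-n)))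
    simp only [← HilbertBasis.repr_apply_apply, mFourierBasis_repr] at h1
    refine h1.unique ?_
    convert coeff_sum d n hg using 2 with k
    apply integral_congr_ae
    filter_upwards [(rho_memLp d k hg2).coeFn_toLp] with t ht
    rw [hP, ht]
  refine ⟨cub d p, cub_int d (Lp.memLp p), cub_memLp d (Lp.memLp p), ?_, ?_⟩
  · have e1 : g - cub d p =ᵐ[volume] (Qk d 0)ᶜ.indicator g - cub d D := by
      have h1 : ∀ᵐ t ∂(volume : Measure (UnitAddTorus (Fin d))), p t = g (rho d 0 t) + D t := by
        rw [hpD]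
        filter_upwards [Lp.coeFn_add (P 0) D, (rho_memLp d 0 hg2).coeFn_toLp] with t h1 h2
        rw [h1, Pi.add_apply, hP, h2]; rfl
      have h2 := (tor_mp d).quasiMeasurePreserving.ae h1
      rw [ae_restrict_iff' (Qk_meas d 0)] at h2
      filter_upwards [h2] with ξ hξ
      by_cases hm : ξ ∈ Qk d 0
      · simp [cub, hm, hξ hm, rho_tor d ξ hm]
      · simp [cub, hm]
    rw [eLpNorm_congr_ae e1]
    refine (eLpNorm_sub_le (hg2.1.indicator (Qk_meas d 0).compl) (cub_aesm d (Lp.aestronglyMeasurable D))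
      (by norm_num)).trans ?_
    rw [eLpNorm_indicator_eq_eLpNorm_restrict (Qk_meas d 0).compl,
      cub_norm d (Lp.aestronglyMeasurable D)]
    gcongr
    rw [← ENNReal.ofReal_toReal (Lp.eLpNorm_ne_top D), ← Lp.norm_def]
    exact ENNReal.ofReal_le_ofReal hDn
  · have h1 : HasSum (fun n => 𝓕⁻ g (latt d n) • mFourierLp 2 (-n)) p := by
      have := (Equiv.neg (Fin d → ℤ)).hasSum_iff.2 (hasSum_mFourier_series_L2 p)
      simpa [Function.comp_def, hcoef] using this
    have h2 : Tendsto (fun s : Finset (Fin d → ℤ) =>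
        eLpNorm (⇑p - ⇑(∑ n ∈ s, 𝓕⁻ g (latt d n) • mFourierLp 2 (-n))) 2 volume) atTop (𝓝 0) := by
      have := (Lp.tendsto_Lp_iff_tendsto_eLpNorm' _ _).1 h1
      refine this.congr fun s => ?_
      rw [eLpNorm_sub_comm]
    refine h2.congr fun s => ?_
    rw [← cub_norm d ((Lp.aestronglyMeasurable _).sub (Lp.aestronglyMeasurable _))]
    apply eLpNorm_congr_ae
    have h3 : ∀ᵐ t ∂(volume : Measure (UnitAddTorus (Fin d))),
        (∑ n ∈ s, 𝓕⁻ g (latt d n) • mFourierLp 2 (-n) :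
          Lp ℂ 2 (volume : Measure (UnitAddTorus (Fin d)))) t
          = ∑ n ∈ s, 𝓕⁻ g (latt d n) * mFourier (-n) t := by
      induction s using Finset.induction_on with
      | empty =>
        simp only [Finset.sum_empty]
        filter_upwards [Lp.coeFn_zero ℂ 2 (volume : Measure (UnitAddTorus (Fin d)))] with t ht
        rw [ht]; rfl
      | insert a s ha ih =>
        simp only [Finset.sum_insert ha]
        filter_upwards [ih, Lp.coeFn_add (𝓕⁻ g (latt d a) • mFourierLp 2 (-a))
          (∑ n ∈ s, 𝓕⁻ g (latt d n) • mFourierLp 2 (-n)),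
          Lp.coeFn_smul (𝓕⁻ g (latt d a)) (mFourierLp 2 (-a)), coeFn_mFourierLp 2 (-a)]
          with t h1 h2 h3 h4
        rw [h2, Pi.add_apply, h1, h3, Pi.smul_apply, h4, smul_eq_mul]
    have h4 := (tor_mp d).quasiMeasurePreserving.ae h3
    rw [ae_restrict_iff' (Qk_meas d 0)] at h4
    filter_upwards [h4] with ξ hξ
    by_cases hm : ξ ∈ Qk d 0
    · simp only [cub, phi, Set.indicator_of_mem hm, Pi.sub_apply, Finset.sum_apply, Pi.smul_apply,
        hξ hm, smul_eq_mul]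
    · simp [cub, phi, hm]

end Series

section Sinc
open FourierTransform UnitAddTorus

attribute [local instance] instMSCircle instHaarCircle instProbCircle

lemma sinc_int (y : ℝ) : ∫ s in Set.Ioc (-1 / 2 : ℝ) (-1 / 2 + 1),
    Complex.exp (((2 * Real.pi * (s * y) : ℝ) : ℂ) * Complex.I) = (sinc' (Real.pi * y) : ℂ) := by
  rw [← intervalIntegral.integral_of_le (by norm_num)]
  by_cases hy : y = 0
  · subst hy; simp [sinc']
  have hpi := Real.pi_pos.ne'
  have hpi' : (Real.pi : ℂ) ≠ 0 := by exact_mod_cast hpi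
  have hy' : (y : ℂ) ≠ 0 := by exact_mod_cast hy
  have hc : (2 * Real.pi * y * Complex.I : ℂ) ≠ 0 := by
    simp [hpi, hy]
  have e : ∀ s : ℝ, Complex.exp (((2 * Real.pi * (s * y) : ℝ) : ℂ) * Complex.I)
      = Complex.exp ((2 * Real.pi * y * Complex.I : ℂ) * s) := by
    intro s; congr 1; push_cast; ring
  simp only [e]
  rw [integral_exp_mul_complex hc]
  have e1 : (2 * Real.pi * y * Complex.I : ℂ) * ((-1 / 2 + 1 : ℝ) : ℂ) = (Real.pi * y : ℂ) * Complex.I := by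
    push_cast; ring
  have e2 : (2 * Real.pi * y * Complex.I : ℂ) * ((-1 / 2 : ℝ) : ℂ) = -(Real.pi * y : ℂ) * Complex.I := by
    push_cast; ring
  rw [e1, e2, sinc', if_neg (by positivity)]
  push_cast
  rw [Complex.sin]
  field_simp
  rw [Complex.I_sq]
  ring

lemma phi_fourier (d : ℕ) (n : Fin d → ℤ) (x : EuclideanSpace ℝ (Fin d)) :
    𝓕⁻ (phi d n) x = (fN d 1 n x : ℂ) := by
  rw [Real.fourierInv_eq']
  have e : ∀ ξ : EuclideanSpace ℝ (Fin d),
      Complex.exp (((2 * Real.pi * inner ℝ ξ x : ℝ) : ℂ) * Complex.I) • phi d n ξ =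
      ∏ j, (Set.Ioc (-1 / 2 : ℝ) (-1 / 2 + 1)).indicator
        (fun s => Complex.exp (((2 * Real.pi * (s * (x j - n j)) : ℝ) : ℂ) * Complex.I)) (ξ j) := by
    intro ξ
    by_cases hm : ξ ∈ Qk d 0
    · have hj : ∀ j, ξ j ∈ Set.Ioc (-1 / 2 : ℝ) (-1 / 2 + 1) := by simpa [Qk] using hm
      rw [phi, Set.indicator_of_mem hm, mF_tor, smul_eq_mul, ← Complex.exp_add]
      rw [Finset.prod_congr rfl fun j _ => Set.indicator_of_mem (hj j) _, ← Complex.exp_sum]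
      congr 1
      rw [← Finset.sum_mul, ← add_mul, ← Complex.ofReal_add, ← Complex.ofReal_sum]
      congr 2
      simp only [PiLp.inner_apply, Finset.mul_sum, ← Finset.sum_add_distrib, latt]
      refine Finset.sum_congr rfl fun j _ => ?_
      simp
      ring
    · rw [phi, Set.indicator_of_notMem hm, smul_zero]
      have : ∃ j, ξ j ∉ Set.Ioc (-1 / 2 : ℝ) (-1 / 2 + 1) := by
        by_contra! hh; exact hm (by simpa [Qk] using hh)
      obtain ⟨j, hj⟩ := this
      exact (Finset.prod_eq_zero (Finset.mem_univ j) (Set.indicator_of_notMem hj _)).symm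
  simp only [e]
  have h1 := (PiLp.volume_preserving_ofLp (Fin d)).integral_comp
    (MeasurableEquiv.toLp 2 (Fin d → ℝ)).symm.measurableEmbedding
    (fun ξ : Fin d → ℝ => ∏ j, (Set.Ioc (-1 / 2 : ℝ) (-1 / 2 + 1)).indicator
        (fun s => Complex.exp (((2 * Real.pi * (s * (x j - n j)) : ℝ) : ℂ) * Complex.I)) (ξ j))
  rw [h1, integral_fintype_prod_volume_eq_prod]
  simp only [integral_indicator measurableSet_Ioc, sinc_int, fN]
  push_cast
  simp

lemma mF_memLp (d : ℕ) (n : Fin d → ℤ) :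
    MemLp (fun t => mFourier n t : UnitAddTorus (Fin d) → ℂ) 2 volume := by
  refine MemLp.of_bound (mFourier n).continuous.aestronglyMeasurable 1 (Eventually.of_forall fun t => ?_)
  exact ((mFourier n).norm_coe_le_norm t).trans mFourier_norm.le

lemma phi_int (d : ℕ) (n : Fin d → ℤ) : Integrable (phi d n) := cub_int d (mF_memLp d (-n))
lemma phi_memLp (d : ℕ) (n : Fin d → ℤ) : MemLp (phi d n) 2 volume := cub_memLp d (mF_memLp d (-n))

end Sinc

section Unit
open FourierTransform

lemma fi_sub {V : Type*} [NormedAddCommGroup V] [InnerProductSpace ℝ V] [FiniteDimensional ℝ V]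
  [MeasurableSpace V] [BorelSpace V] {f g : V → ℂ} (hf : Integrable f) (hg : Integrable g) (x : V) :
    𝓕⁻ (f - g) x = 𝓕⁻ f x - 𝓕⁻ g x := by
  have key : ∀ f : V → ℂ, Integrable f →
      Integrable fun v => Complex.exp (((2 * Real.pi * inner ℝ v x : ℝ) : ℂ) * Complex.I) • f v := by
    intro f hf
    refine hf.bdd_mul (c := 1) ?_ (Eventually.of_forall fun ξ => ?_)
    · exact Continuous.aestronglyMeasurable (by fun_prop)
    · rw [Complex.norm_exp_ofReal_mul_I]
  simp only [Real.fourierInv_eq', Pi.sub_apply, smul_sub]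
  exact integral_sub (key f hf) (key g hg)

lemma fi_sum {V ι : Type*} [NormedAddCommGroup V] [InnerProductSpace ℝ V] [FiniteDimensional ℝ V]
  [MeasurableSpace V] [BorelSpace V] (s : Finset ι) (c : ι → ℂ) (f : ι → V → ℂ)
  (hf : ∀ i, Integrable (f i)) (x : V) :
    𝓕⁻ (∑ i ∈ s, c i • f i) x = ∑ i ∈ s, c i * 𝓕⁻ (f i) x := by
  have key : ∀ f : V → ℂ, Integrable f →
      Integrable fun v => Complex.exp (((2 * Real.pi * inner ℝ v x : ℝ) : ℂ) * Complex.I) • f v := by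
    intro f hf
    refine hf.bdd_mul (c := 1) ?_ (Eventually.of_forall fun ξ => ?_)
    · exact Continuous.aestronglyMeasurable (by fun_prop)
    · rw [Complex.norm_exp_ofReal_mul_I]
  simp only [Real.fourierInv_eq', Finset.sum_apply, Pi.smul_apply, Finset.smul_sum]
  rw [integral_finsetSum]
  · refine Finset.sum_congr rfl fun i _ => ?_
    rw [← integral_const_mul]
    congr 1; ext v; simp only [smul_eq_mul]; ring
  · intro i _
    refine ((key _ (hf i)).const_mul (c i)).congr (Eventually.of_forall fun v => ?_)
    simp only [smul_eq_mul]; ring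

/-- reduction to the summability estimate -/
lemma unit_red (d : ℕ) (u₀ : EuclideanSpace ℝ (Fin d) → ℝ) {T : ℝ}
    {v : EuclideanSpace ℝ (Fin d) → ℂ} (hT : 0 < T) (hv : MemLp v 2 volume)
    (hrep : ∀ x, (heatSol d u₀ T x : ℂ) = 𝓕⁻ (fun ξ => gmul d T 0 ξ * v ξ) x)
    (g : EuclideanSpace ℝ (Fin d) → ℂ) (hgdef : g = fun ξ => gmul d T 0 ξ * v ξ)
    (hs : Summable fun k => (eLpNorm g 2 (volume.restrict (Qk d k))).toReal) :
    ∃ R : EuclideanSpace ℝ (Fin d) → ℝ, MemLp R 2 volume ∧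
      eLpNorm R 2 volume ≤ eLpNorm g 2 (volume.restrict (Qk d 0)ᶜ) +
        ENNReal.ofReal (∑' k, if k = 0 then 0 else (eLpNorm g 2 (volume.restrict (Qk d k))).toReal) ∧
      HasSumL2 d (fun n x => heatSol d u₀ T (latt d n) * fN d 1 n x)
            (fun x => heatSol d u₀ T x - R x) := by
  have hg : Integrable g := by
    rw [hgdef]; exact MemLp.integrable_mul (gmul_memLp d hT 0) hv
  have hg2 : MemLp g 2 volume := by
    refine hv.of_le hg.aestronglyMeasurable (Eventually.of_forall fun ξ => ?_)
    rw [hgdef, norm_mul, gmul_norm]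
    refine mul_le_of_le_one_left (norm_nonneg _) (Real.exp_le_one_iff.2 ?_)
    have := Real.pi_pos
    have : 0 ≤ 4 * Real.pi ^ 2 * T * ‖ξ‖ ^ 2 := by positivity
    linarith
  rw [← hgdef] at hrep
  obtain ⟨h, hi, h2, hle, hlim⟩ := series_main d hg hg2 hs
  have hre : ∀ w : EuclideanSpace ℝ (Fin d) → ℂ, eLpNorm (fun x => (w x).re) 2 volume ≤ eLpNorm w 2 volume :=
    fun w => eLpNorm_mono fun x => by simpa using Complex.abs_re_le_norm (w x)
  have hcont := aux_fourierInv_cont (hg.sub hi)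
  have hR : eLpNorm (fun x => (𝓕⁻ (g - h) x).re) 2 volume ≤ eLpNorm (g - h) 2 volume :=
    (hre _).trans (aux_planch (hg.sub hi) (hg2.sub h2)).le
  refine ⟨fun x => (𝓕⁻ (g - h) x).re, ⟨(Complex.continuous_re.comp hcont).aestronglyMeasurable,
    hR.trans_lt (hg2.sub h2).2⟩, hR.trans hle, ?_⟩
  refine tendsto_of_tendsto_of_tendsto_of_le_of_le tendsto_const_nhds hlim (fun _ => zero_le) fun s => ?_
  have hsi : Integrable (∑ n ∈ s, 𝓕⁻ g (latt d n) • phi d n) :=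
    integrable_finsetSum' _ fun n _ => (phi_int d n).smul _
  have hsm : MemLp (∑ n ∈ s, 𝓕⁻ g (latt d n) • phi d n) 2 volume :=
    memLp_finsetSum' _ fun n _ => (phi_memLp d n).const_smul _
  show _ ≤ eLpNorm (h - ∑ n ∈ s, 𝓕⁻ g (latt d n) • phi d n) 2 volume
  rw [← aux_planch (hi.sub hsi) (h2.sub hsm)]
  refine le_trans (le_of_eq ?_) (hre _)
  congr 1
  ext x
  beta_reduce
  rw [fi_sub hi hsi, fi_sub hg hi, fi_sum _ _ _ (phi_int d)]
  simp only [phi_fourier, ← hrep, Complex.sub_re, Complex.re_sum, ← Complex.ofReal_mul, Complex.ofReal_re]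
  ring

end Unit

lemma geo_int {r : ℝ} (h0 : 0 ≤ r) (h1 : r < 1) (s : Finset ℤ) :
    ∑ m ∈ s, r ^ m.natAbs ≤ 2 * (1 - r)⁻¹ := by
  have hg := hasSum_geometric_of_lt_one h0 h1
  have h2 : HasSum (fun m : ℤ => r ^ m.natAbs) ((1 - r)⁻¹ + r * (1 - r)⁻¹) := by
    refine HasSum.of_nat_of_neg_add_one ?_ ?_
    · simpa using hg
    · have := hg.mul_left r
      refine this.congr_fun fun n => ?_
      have : (-((n : ℤ) + 1)).natAbs = n + 1 := by omega
      rw [this, pow_succ, mul_comm]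
  have h3 := sum_le_hasSum s (fun m _ => pow_nonneg h0 _) h2
  have h4 : 0 ≤ (1 - r)⁻¹ := inv_nonneg.2 (by linarith)
  nlinarith

lemma theta_bd {a : ℝ} (ha : 0 < a) (s : Finset ℤ) :
    ∑ m ∈ s, Real.exp (-(a * (m : ℝ) ^ 2)) ≤ 2 * Real.exp 1 * (1 + (Real.sqrt a)⁻¹) := by
  set b := Real.sqrt a with hb
  have hb0 : 0 < b := Real.sqrt_pos.2 ha
  have hba : b ^ 2 = a := Real.sq_sqrt ha.le
  set r := Real.exp (-b) with hr
  have hr1 : r < 1 := by rw [hr]; exact Real.exp_zero ▸ Real.exp_lt_exp.2 (by linarith)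
  have hr0 : 0 < r := Real.exp_pos _
  have h1 : ∀ m ∈ s, Real.exp (-(a * (m : ℝ) ^ 2)) ≤ Real.exp 1 * r ^ m.natAbs := by
    intro m _
    rw [hr, ← Real.exp_nat_mul, ← Real.exp_add]
    apply Real.exp_le_exp.2
    have : ((m.natAbs : ℕ) : ℝ) ^ 2 = (m : ℝ) ^ 2 := by
      rw [Nat.cast_natAbs]; push_cast; exact sq_abs _
    rw [← hba, ← this]
    nlinarith [sq_nonneg (b * (m.natAbs : ℝ) - 1 / 2)]
  refine (Finset.sum_le_sum h1).trans ?_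
  rw [← Finset.mul_sum]
  have h2 := geo_int hr0.le hr1 s
  have h3 : (1 - r)⁻¹ ≤ 1 + b⁻¹ := by
    have h4 : r * (1 + b) ≤ 1 := by
      have := Real.add_one_le_exp b
      calc r * (1 + b) ≤ r * Real.exp b := by
            apply mul_le_mul_of_nonneg_left _ hr0.le; linarith
        _ = 1 := by rw [hr, ← Real.exp_add]; simp
    have h5 : b / (1 + b) ≤ 1 - r := by
      rw [div_le_iff₀ (by linarith)]; nlinarith
    calc (1 - r)⁻¹ ≤ (b / (1 + b))⁻¹ := inv_anti₀ (by positivity) h5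
      _ = 1 + b⁻¹ := by field_simp; ring
  have := Real.exp_pos 1
  nlinarith

lemma theta_d (d : ℕ) {a : ℝ} (ha : 0 < a) (s : Finset (Fin d → ℤ)) :
    ∑ k ∈ s, Real.exp (-(a * ∑ j, (k j : ℝ) ^ 2)) ≤
      (2 * Real.exp 1 * (1 + (Real.sqrt a)⁻¹)) ^ d := by
  have h1 : s ⊆ Fintype.piFinset (fun j : Fin d => s.image (fun k => k j)) := by
    intro k hk
    rw [Fintype.mem_piFinset]
    intro j
    exact Finset.mem_image_of_mem (fun k : Fin d → ℤ => k j) hk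
  refine (Finset.sum_le_sum_of_subset_of_nonneg h1 (fun _ _ _ => (Real.exp_pos _).le)).trans ?_
  have h2 := Finset.prod_univ_sum (fun j : Fin d => s.image (fun k => k j))
    (fun (_ : Fin d) (m : ℤ) => Real.exp (-(a * (m : ℝ) ^ 2)))
  calc _ = ∑ p ∈ Fintype.piFinset (fun j : Fin d => s.image (fun k : Fin d → ℤ => k j)),
        ∏ x, Real.exp (-(a * ((p x : ℤ) : ℝ) ^ 2)) := by
        refine Finset.sum_congr rfl fun k _ => ?_
        rw [← Real.exp_sum, Finset.mul_sum, Finset.sum_neg_distrib]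
    _ = ∏ j : Fin d, ∑ m ∈ s.image (fun k : Fin d → ℤ => k j), Real.exp (-(a * (m : ℝ) ^ 2)) :=
        h2.symm
    _ ≤ ∏ _j : Fin d, (2 * Real.exp 1 * (1 + (Real.sqrt a)⁻¹)) := by
        refine Finset.prod_le_prod (fun _ _ => Finset.sum_nonneg fun _ _ => (Real.exp_pos _).le)
          fun j _ => theta_bd ha _
    _ = _ := by simp

lemma const_bd (d : ℕ) {a : ℝ} (ha : 0 < a) :
    Real.sqrt ((2 * Real.exp 1 * (1 + (Real.sqrt a)⁻¹)) ^ d) ≤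
      Real.sqrt ((4 * Real.exp 1) ^ d) * (1 + a ^ (-(d : ℝ) / 4)) := by
  set y := a ^ (-(d : ℝ) / 4) with hy
  have hy0 : 0 < y := Real.rpow_pos_of_pos ha _
  have hx : ((Real.sqrt a)⁻¹) ^ d = y ^ 2 := by
    rw [hy, Real.sqrt_eq_rpow, ← Real.rpow_neg ha.le, ← Real.rpow_natCast, ← Real.rpow_mul ha.le,
      ← Real.rpow_natCast, ← Real.rpow_mul ha.le]
    congr 1; push_cast; ring
  have he := Real.exp_pos 1
  have hs : 0 ≤ (Real.sqrt a)⁻¹ := by positivity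
  have h1 : (1 + (Real.sqrt a)⁻¹) ^ d ≤ 2 ^ d * (1 + y ^ 2) := by
    have := add_pow_le (zero_le_one) hs d
    rw [one_pow, hx] at this
    refine this.trans ?_
    apply mul_le_mul_of_nonneg_right _ (by positivity)
    exact pow_le_pow_right₀ (by norm_num) (by omega)
  have h2 : (2 * Real.exp 1 * (1 + (Real.sqrt a)⁻¹)) ^ d ≤ (4 * Real.exp 1) ^ d * (1 + y) ^ 2 := by
    calc _ = (2 * Real.exp 1) ^ d * (1 + (Real.sqrt a)⁻¹) ^ d := mul_pow _ _ _
      _ ≤ (2 * Real.exp 1) ^ d * (2 ^ d * (1 + y ^ 2)) := by gcongr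
      _ = (4 * Real.exp 1) ^ d * (1 + y ^ 2) := by
          rw [← mul_assoc, ← mul_pow]; congr 2; ring
      _ ≤ _ := by gcongr; nlinarith
  refine (Real.sqrt_le_sqrt h2).trans ?_
  rw [Real.sqrt_mul (by positivity), Real.sqrt_sq (by positivity)]

lemma Qk_norm (d : ℕ) (k : Fin d → ℤ) {ξ : EuclideanSpace ℝ (Fin d)} (h : ξ ∈ Qk d k) :
    (∑ j, (k j : ℝ) ^ 2) / 4 ≤ ‖ξ‖ ^ 2 := by
  rw [EuclideanSpace.norm_sq_eq, Finset.sum_div]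
  refine Finset.sum_le_sum fun j _ => ?_
  obtain ⟨h1, h2⟩ := h j
  rw [Real.norm_eq_abs, sq_abs]
  rcases lt_trichotomy (k j) 0 with h0 | h0 | h0
  · have : (k j : ℝ) ≤ -1 := by exact_mod_cast (by omega : k j ≤ -1)
    nlinarith
  · simp [h0]; positivity
  · have : (1 : ℝ) ≤ k j := by exact_mod_cast h0
    nlinarith

lemma sum_sq_ge (d : ℕ) {k : Fin d → ℤ} (hk : k ≠ 0) : 1 ≤ ∑ j, (k j : ℝ) ^ 2 := by
  obtain ⟨j, hj⟩ := Function.ne_iff.1 hk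
  have h1 : (1 : ℝ) ≤ (k j : ℝ) ^ 2 := by
    have : (1 : ℤ) ≤ (k j) ^ 2 := by
      have : 0 < (k j) ^ 2 := by
        have : k j ≠ 0 := hj
        positivity
      omega
    exact_mod_cast this
  exact h1.trans (Finset.single_le_sum (f := fun j => (k j : ℝ) ^ 2)
    (fun _ _ => sq_nonneg _) (Finset.mem_univ j))

lemma compl_norm (d : ℕ) {ξ : EuclideanSpace ℝ (Fin d)} (h : ξ ∈ (Qk d 0)ᶜ) :
    1 / 4 ≤ ‖ξ‖ ^ 2 := by
  have h0 : ξ ∈ ⋃ k, Qk d k := by rw [Qk_cover]; trivial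
  obtain ⟨k, hk⟩ := Set.mem_iUnion.1 h0
  have hk0 : k ≠ 0 := by rintro rfl; exact h hk
  have := Qk_norm d k hk
  have := sum_sq_ge d hk0
  linarith

lemma w_sum (d : ℕ) {v : EuclideanSpace ℝ (Fin d) → ℂ} (hv : MemLp v 2 volume)
    (s : Finset (Fin d → ℤ)) :
    ∑ k ∈ s, (eLpNorm v 2 (volume.restrict (Qk d k))).toReal ^ 2 ≤
      (eLpNorm v 2 volume).toReal ^ 2 := by
  have e : ∀ μ : Measure (EuclideanSpace ℝ (Fin d)),
      (eLpNorm v 2 μ) ^ 2 = ∫⁻ x, ‖v x‖ₑ ^ 2 ∂μ := by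
    intro μ
    have := eLpNorm_nnreal_pow_eq_lintegral (f := v) (p := 2) (μ := μ) (by norm_num)
    simpa using this
  have hfin : ∀ k, (eLpNorm v 2 (volume.restrict (Qk d k))) ^ 2 ≠ ∞ := fun k =>
    ENNReal.pow_ne_top (hv.restrict _).eLpNorm_ne_top
  simp_rw [← ENNReal.toReal_pow]
  rw [← ENNReal.toReal_sum (fun k _ => hfin k)]
  apply ENNReal.toReal_mono (ENNReal.pow_ne_top hv.eLpNorm_ne_top)
  simp_rw [e]
  rw [← lintegral_biUnion_finset (fun i _ j _ hij => Qk_disj d hij) (fun k _ => Qk_meas d k)]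
  exact setLIntegral_le_lintegral _ _

lemma rest_bd (d : ℕ) {T c : ℝ} (v : EuclideanSpace ℝ (Fin d) → ℂ)
    {S : Set (EuclideanSpace ℝ (Fin d))} (hS : MeasurableSet S) (hc : 0 ≤ c)
    (h : ∀ ξ ∈ S, ‖gmul d T 0 ξ‖ ≤ c) :
    eLpNorm (fun ξ => gmul d T 0 ξ * v ξ) 2 (volume.restrict S) ≤
      ENNReal.ofReal c * eLpNorm v 2 (volume.restrict S) := by
  refine eLpNorm_le_mul_eLpNorm_of_ae_le_mul ?_ 2
  filter_upwards [ae_restrict_mem hS] with ξ hξ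
  rw [norm_mul]
  exact mul_le_mul_of_nonneg_right (h ξ hξ) (norm_nonneg _)

lemma pi_sq_ge : (9 : ℝ) ≤ Real.pi ^ 2 := by nlinarith [Real.pi_gt_three]

theorem unit_thm (d : ℕ) :
    ∃ C : ℝ, 0 < C ∧
      ∀ u₀ : EuclideanSpace ℝ (Fin d) → ℝ, MemLp u₀ 2 volume →
      ∀ T : ℝ, 0 < T →
        ∃ R : EuclideanSpace ℝ (Fin d) → ℝ, MemLp R 2 volume ∧
          eLpNorm R 2 volume ≤
            ENNReal.ofReal (C * (1 + T ^ (-(d : ℝ) / 4)) * Real.exp (-T)) * eLpNorm u₀ 2 volume ∧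
          HasSumL2 d (fun n x => heatSol d u₀ T (latt d n) * fN d 1 n x)
            (fun x => heatSol d u₀ T x - R x) := by
  refine ⟨1 + Real.sqrt ((4 * Real.exp 1) ^ d), by positivity, fun u₀ hu T hT => ?_⟩
  obtain ⟨v, hv, hvn, hrep⟩ := heat_repr d u₀ hu hT
  set g : EuclideanSpace ℝ (Fin d) → ℂ := fun ξ => gmul d T 0 ξ * v ξ with hg
  set V := (eLpNorm v 2 volume).toReal with hV
  set w : (Fin d → ℤ) → ℝ := fun k => (eLpNorm v 2 (volume.restrict (Qk d k))).toReal with hw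
  set b : (Fin d → ℤ) → ℝ := fun k => (eLpNorm g 2 (volume.restrict (Qk d k))).toReal with hb
  set p : (Fin d → ℤ) → ℝ := fun k => Real.exp (-(T / 2 * ∑ j, (k j : ℝ) ^ 2)) with hp
  set K := Real.sqrt ((2 * Real.exp 1 * (1 + (Real.sqrt T)⁻¹)) ^ d) with hK
  have hw0 : ∀ k, 0 ≤ w k := fun k => ENNReal.toReal_nonneg
  have hb0 : ∀ k, 0 ≤ b k := fun k => ENNReal.toReal_nonneg
  have hV0 : 0 ≤ V := ENNReal.toReal_nonneg
  have hpi := pi_sq_ge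
  have hbk : ∀ k, k ≠ 0 → b k ≤ Real.exp (-T) * (p k * w k) := by
    intro k hk
    have h1 := rest_bd d (T := T) (c := Real.exp (-T) * p k) v (Qk_meas d k) (by positivity) (by
      intro ξ hξ
      rw [gmul_norm, hp, ← Real.exp_add]
      apply Real.exp_le_exp.2
      have h2 := Qk_norm d k hξ
      have h3 := sum_sq_ge d hk
      set S := ∑ j, (k j : ℝ) ^ 2
      have h4 : T * (9 * S) ≤ T * (4 * Real.pi ^ 2 * ‖ξ‖ ^ 2) := by
        apply mul_le_mul_of_nonneg_left _ hT.le
        nlinarith [mul_le_mul hpi h2 (by linarith) (by linarith)]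
      nlinarith)
    have h5 := ENNReal.toReal_mono (ENNReal.mul_ne_top ENNReal.ofReal_ne_top
      (hv.restrict _).eLpNorm_ne_top) h1
    rw [ENNReal.toReal_mul, ENNReal.toReal_ofReal (by positivity), mul_assoc] at h5
    exact h5
  set c : (Fin d → ℤ) → ℝ := fun k => if k = 0 then 0 else b k with hc
  have hc0 : ∀ k, 0 ≤ c k := by
    intro k; rw [hc]; dsimp only; split_ifs; exacts [le_rfl, hb0 k]
  have hcb : ∀ k, c k ≤ Real.exp (-T) * (p k * w k) := by
    intro k; rw [hc]; dsimp only; split_ifs with h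
    · have := hw0 k; positivity
    · exact hbk k h
  have hfs : ∀ s : Finset (Fin d → ℤ), ∑ k ∈ s, c k ≤ Real.exp (-T) * (K * V) := by
    intro s
    refine (Finset.sum_le_sum fun k _ => hcb k).trans ?_
    rw [← Finset.mul_sum]
    apply mul_le_mul_of_nonneg_left _ (Real.exp_pos _).le
    refine (Real.sum_mul_le_sqrt_mul_sqrt s p w).trans ?_
    apply mul_le_mul _ _ (Real.sqrt_nonneg _) (Real.sqrt_nonneg _)
    · apply Real.sqrt_le_sqrt
      refine le_trans (le_of_eq ?_) (theta_d d hT s)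
      refine Finset.sum_congr rfl fun k _ => ?_
      rw [hp, ← Real.exp_nat_mul]
      congr 1; push_cast; ring
    · rw [← Real.sqrt_sq hV0]
      exact Real.sqrt_le_sqrt (w_sum d hv s)
  have hcs : Summable c := summable_of_sum_le hc0 hfs
  have hct : ∑' k, c k ≤ Real.exp (-T) * (K * V) := hcs.tsum_le_of_sum_le hfs
  have hbs : Summable b := by
    refine hcs.congr_cofinite ?_
    have : ∀ᶠ k in cofinite, k ≠ (0 : Fin d → ℤ) := (Set.finite_singleton _).compl_mem_cofinite
    filter_upwards [this] with k hk
    simp [hc, hk]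
  obtain ⟨R, hR, hRn, hsum⟩ := unit_red d u₀ hT hv hrep g hg hbs
  refine ⟨R, hR, hRn.trans ?_, hsum⟩
  have h1 := rest_bd d (T := T) (c := Real.exp (-T)) v (Qk_meas d 0).compl (by positivity) (by
      intro ξ hξ
      rw [gmul_norm]
      apply Real.exp_le_exp.2
      have h2 := compl_norm d hξ
      have h4 : T * 9 ≤ T * (4 * Real.pi ^ 2 * ‖ξ‖ ^ 2) := by
        apply mul_le_mul_of_nonneg_left _ hT.le
        nlinarith [mul_le_mul hpi h2 (by linarith) (by linarith)]
      nlinarith)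
  have h2 : ENNReal.ofReal V = eLpNorm u₀ 2 volume := by
    rw [hV, ENNReal.ofReal_toReal hv.eLpNorm_ne_top, hvn]
  have h3 : eLpNorm v 2 (volume.restrict (Qk d 0)ᶜ) ≤ ENNReal.ofReal V := by
    rw [h2, ← hvn]; exact eLpNorm_restrict_le _ _ _ _
  have hKb := const_bd d hT
  rw [← hK] at hKb
  set y := T ^ (-(d : ℝ) / 4) with hy
  have hy0 : 0 < y := Real.rpow_pos_of_pos hT _
  calc _ ≤ ENNReal.ofReal (Real.exp (-T)) * ENNReal.ofReal V
        + ENNReal.ofReal (Real.exp (-T) * (K * V)) :=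
        add_le_add (h1.trans (by gcongr)) (ENNReal.ofReal_le_ofReal hct)
    _ = ENNReal.ofReal (Real.exp (-T) * V + Real.exp (-T) * (K * V)) := by
        rw [← ENNReal.ofReal_mul (by positivity), ← ENNReal.ofReal_add (by positivity)]
        have : 0 ≤ K := Real.sqrt_nonneg _
        positivity
    _ ≤ ENNReal.ofReal ((1 + Real.sqrt ((4 * Real.exp 1) ^ d)) * (1 + y) * Real.exp (-T) * V) := by
        apply ENNReal.ofReal_le_ofReal
        have : 1 + K ≤ (1 + Real.sqrt ((4 * Real.exp 1) ^ d)) * (1 + y) := by nlinarith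
        have h6 := mul_le_mul_of_nonneg_right this (mul_nonneg (Real.exp_pos (-T)).le hV0)
        nlinarith
    _ = _ := by
        rw [ENNReal.ofReal_mul (by positivity), h2]

/-- dilation constant -/
def dilc (d : ℕ) (N : ℝ) : ℝ≥0∞ := ENNReal.ofReal (|(N ^ d)⁻¹|) ^ (1 / 2 : ℝ)

lemma dilc_ne_top (d : ℕ) (N : ℝ) : dilc d N ≠ ∞ :=
  ENNReal.rpow_ne_top_of_nonneg (by norm_num) ENNReal.ofReal_ne_top

lemma dil_norm (d : ℕ) {N : ℝ} (hN : 0 < N) (f : EuclideanSpace ℝ (Fin d) → ℝ) :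
    eLpNorm (fun x => f (N • x)) 2 volume = dilc d N * eLpNorm f 2 volume := by
  have he : MeasurableEmbedding (fun x : EuclideanSpace ℝ (Fin d) => N • x) :=
    (Homeomorph.smulOfNeZero N hN.ne').measurableEmbedding
  have h1 := he.eLpNorm_map_measure (g := f) (p := 2) (μ := volume)
  have h2 := Measure.map_addHaar_smul (volume : Measure (EuclideanSpace ℝ (Fin d))) hN.ne'
  rw [finrank_euclideanSpace_fin] at h2
  have h3 : (fun x => f (N • x)) = f ∘ (fun x => N • x) := rfl
  rw [h3, ← h1, h2, eLpNorm_smul_measure_of_ne_top (by norm_num)]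
  simp [dilc]

lemma dil_memLp (d : ℕ) {N : ℝ} (hN : 0 < N) {f : EuclideanSpace ℝ (Fin d) → ℝ}
    (hf : MemLp f 2 volume) : MemLp (fun x => f (N • x)) 2 volume := by
  refine ⟨?_, ?_⟩
  · exact hf.1.comp_quasiMeasurePreserving
      ⟨by fun_prop, by
        rw [Measure.map_addHaar_smul _ hN.ne']
        exact Measure.smul_absolutelyContinuous⟩
  · rw [dil_norm d hN]
    exact ENNReal.mul_lt_top (dilc_ne_top d N).lt_top hf.2

lemma heat_dil (d : ℕ) {N T : ℝ} (hN : 0 < N) (hT : 0 < T) (u₀ : EuclideanSpace ℝ (Fin d) → ℝ)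
    (x : EuclideanSpace ℝ (Fin d)) :
    heatSol d (fun y => u₀ (N⁻¹ • y)) (T * N ^ 2) (N • x) = heatSol d u₀ T x := by
  unfold heatSol
  have h1 := Measure.integral_comp_inv_smul_of_nonneg
    (volume : Measure (EuclideanSpace ℝ (Fin d)))
    (fun y => Real.exp (-‖x - y‖ ^ 2 / (4 * T)) * u₀ y) hN.le
  have h2 : ∀ y : EuclideanSpace ℝ (Fin d),
      Real.exp (-‖N • x - y‖ ^ 2 / (4 * (T * N ^ 2))) * u₀ (N⁻¹ • y) =
      Real.exp (-‖x - N⁻¹ • y‖ ^ 2 / (4 * T)) * u₀ (N⁻¹ • y) := by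
    intro y
    have : N • x - y = N • (x - N⁻¹ • y) := by
      rw [smul_sub, smul_inv_smul₀ hN.ne']
    rw [this, norm_smul, Real.norm_of_nonneg hN.le]
    congr 2
    field_simp
  simp_rw [h2]
  rw [h1, finrank_euclideanSpace_fin, smul_eq_mul, ← mul_assoc]
  congr 1
  rw [← mul_assoc, Real.mul_rpow (by positivity) (by positivity), mul_assoc]
  have : (N ^ 2) ^ (-(d : ℝ) / 2) * N ^ d = 1 := by
    rw [← Real.rpow_natCast N 2, ← Real.rpow_natCast N d, ← Real.rpow_mul hN.le,
      ← Real.rpow_add hN]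
    have : ((2 : ℕ) : ℝ) * (-(d : ℝ) / 2) + d = 0 := by push_cast; ring
    rw [this, Real.rpow_zero]
  rw [this, mul_one]

/-- Asymptotic observability identity: there is `C = C(d) > 0` such that for every
`u₀ ∈ L²(ℝ^d)`, `T > 0`, `N > 0` there exists `R ∈ L²(ℝ^d)` with
`‖R‖ ≤ C (1 + (TN²)^{-d/4}) e^{-TN²} ‖u₀‖` and
`u(T,·) = Σ_{n ∈ ℤ^d} u(T, n/N) f_{N,n} + R` in `L²(ℝ^d)`. -/
theorem statement1 (d : ℕ) (hd : 0 < d) :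
    ∃ C : ℝ, 0 < C ∧
      ∀ u₀ : EuclideanSpace ℝ (Fin d) → ℝ, MemLp u₀ 2 volume →
      ∀ T N : ℝ, 0 < T → 0 < N →
        ∃ R : EuclideanSpace ℝ (Fin d) → ℝ, MemLp R 2 volume ∧
          l2norm d R ≤
            C * (1 + (T * N ^ 2) ^ (-(d : ℝ) / 4)) * Real.exp (-(T * N ^ 2)) * l2norm d u₀ ∧
          HasSumL2 d (fun n x => heatSol d u₀ T (latticePt d N n) * fN d N n x)
            (fun x => heatSol d u₀ T x - R x) := by
  obtain ⟨C, hC, H⟩ := unit_thm d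
  refine ⟨C, hC, fun u₀ hu T N hT hN => ?_⟩
  have hu' : MemLp (fun y => u₀ (N⁻¹ • y)) 2 volume := dil_memLp d (inv_pos.2 hN) hu
  obtain ⟨R, hR, hRn, hs⟩ := H _ hu' (T * N ^ 2) (by positivity)
  have hu2 : eLpNorm u₀ 2 volume =
      dilc d N * eLpNorm (fun y => u₀ (N⁻¹ • y)) 2 volume := by
    rw [← dil_norm d hN]
    congr 1
    funext x
    rw [inv_smul_smul₀ hN.ne']
  refine ⟨fun x => R (N • x), dil_memLp d hN hR, ?_, ?_⟩
  · unfold l2norm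
    have hp : 0 ≤ C * (1 + (T * N ^ 2) ^ (-(d : ℝ) / 4)) * Real.exp (-(T * N ^ 2)) := by positivity
    rw [← ENNReal.toReal_ofReal hp, ← ENNReal.toReal_mul]
    apply ENNReal.toReal_mono (ENNReal.mul_ne_top ENNReal.ofReal_ne_top hu.eLpNorm_ne_top)
    rw [dil_norm d hN, hu2, mul_left_comm]
    gcongr
  · have h1 := ENNReal.Tendsto.const_mul (a := dilc d N) hs (Or.inr (dilc_ne_top d N))
    rw [mul_zero] at h1
    refine h1.congr fun s => ?_
    rw [← dil_norm d hN]
    congr 1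
    funext x
    dsimp only
    rw [heat_dil d hN hT]
    congr 1
    refine Finset.sum_congr rfl fun n _ => ?_
    have h3 : latt d n = N • latticePt d N n := by
      ext j
      simp only [latt, latticePt, PiLp.smul_apply, smul_eq_mul]
      field_simp
    rw [h3, heat_dil d hN hT]
    simp [fN]
end
end

section
/- There is a constant C = C(d) > 0, depending only on the dimension d, such that for every u₀ ∈ L²(ℝ^d), every T > 0 and every N > 0, the sampled values satisfy (Σ_{n∈ℤ^d} |u(T, n/N)|²)^{1/2} ≤ C (1 + (TN²)^{d/4}) T^{-d/4} ‖u₀‖, where u is the heat solution with initial datum u₀. -/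
open MeasureTheory Filter Topology Metric ENNReal NNReal

noncomputable section

lemma aux_oneD (b : ℝ) (hb : 0 < b) (hb1 : b ≤ 1) (s : ℝ) (S : Finset ℤ) :
    ∑ k ∈ S, Real.exp (-b * ((k : ℝ) - s) ^ 2) ≤ Real.exp 1 * √(Real.pi / (b / 2)) := by
  have hint : Integrable (fun x : ℝ => Real.exp (-(b / 2) * (x - s) ^ 2)) :=
    (integrable_exp_neg_mul_sq (by positivity : 0 < b / 2)).comp_sub_right s
  have h1 : ∀ k ∈ S, Real.exp (-b * ((k : ℝ) - s) ^ 2) ≤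
      Real.exp 1 * ∫ x in Set.Ioc (k : ℝ) (k + 1), Real.exp (-(b / 2) * (x - s) ^ 2) := by
    intro k _
    rw [← integral_const_mul]
    have h2 : ∫ x in Set.Ioc (k : ℝ) (k + 1), Real.exp (-b * ((k : ℝ) - s) ^ 2) =
        Real.exp (-b * ((k : ℝ) - s) ^ 2) := by simp
    rw [← h2]
    apply setIntegral_mono_on
    · simp
    · exact (hint.const_mul _).integrableOn
    · exact measurableSet_Ioc
    · intro x hx
      rw [← Real.exp_add]
      apply Real.exp_le_exp.mpr
      have h3 : (x - s) ^ 2 ≤ 2 * ((k : ℝ) - s) ^ 2 + 2 := by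
        nlinarith [sq_nonneg (((k : ℝ) - s) - (x - k)), hx.1, hx.2]
      nlinarith
  refine (Finset.sum_le_sum h1).trans ?_
  rw [← Finset.mul_sum]
  refine mul_le_mul_of_nonneg_left ?_ (Real.exp_pos _).le
  rw [← integral_biUnion_finset]
  · have h4 : ∫ x : ℝ, Real.exp (-(b / 2) * (x - s) ^ 2) = √(Real.pi / (b / 2)) := by
      rw [integral_sub_right_eq_self (fun x : ℝ => Real.exp (-(b / 2) * x ^ 2)) s]
      exact integral_gaussian _
    rw [← h4]
    exact setIntegral_le_integral hint (Eventually.of_forall fun x => (Real.exp_pos _).le)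
  · intro k _; exact measurableSet_Ioc
  · exact (Set.pairwise_disjoint_Ioc_intCast ℝ).set_pairwise _
  · intro k _; exact hint.integrableOn

lemma aux_lattice (d : ℕ) (T N : ℝ) (hT : 0 < T) (hN : 0 < N) (S : Finset (Fin d → ℤ))
    (y : EuclideanSpace ℝ (Fin d)) :
    ∑ n ∈ S, Real.exp (-‖latticePt d N n - y‖ ^ 2 / (4 * T)) ≤
      (Real.exp 1 * √(2 * Real.pi * (1 + 4 * (T * N ^ 2)))) ^ d := by
  set b : ℝ := 1 / (1 + 4 * (T * N ^ 2)) with hb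
  have hM : 0 < T * N ^ 2 := by positivity
  have hb0 : 0 < b := by positivity
  have hb1 : b ≤ 1 := by rw [hb, div_le_one (by positivity)]; linarith
  have hbe : Real.pi / (b / 2) = 2 * Real.pi * (1 + 4 * (T * N ^ 2)) := by
    rw [hb]; field_simp
  have key : ∀ n : Fin d → ℤ, Real.exp (-‖latticePt d N n - y‖ ^ 2 / (4 * T)) ≤
      ∏ j, Real.exp (-b * ((n j : ℝ) - N * y j) ^ 2) := by
    intro n
    rw [← Real.exp_sum]
    apply Real.exp_le_exp.mpr
    rw [EuclideanSpace.real_norm_sq_eq, neg_div, Finset.sum_div, ← Finset.sum_neg_distrib]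
    apply Finset.sum_le_sum
    intro j _
    have : ((latticePt d N n - y) j) ^ 2 / (4 * T)
        = (1 / (4 * (T * N ^ 2))) * ((n j : ℝ) - N * y j) ^ 2 := by
      simp [latticePt]; field_simp
    rw [this, neg_mul, neg_le_neg_iff]
    apply mul_le_mul_of_nonneg_right _ (sq_nonneg _)
    apply one_div_le_one_div_of_le <;> linarith
  let t : Fin d → Finset ℤ := fun j => S.image (fun n => n j)
  calc _ ≤ ∑ n ∈ S, ∏ j, Real.exp (-b * ((n j : ℝ) - N * y j) ^ 2) :=
        Finset.sum_le_sum fun n _ => key n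
    _ ≤ ∑ n ∈ Fintype.piFinset t, ∏ j, Real.exp (-b * ((n j : ℝ) - N * y j) ^ 2) := by
        apply Finset.sum_le_sum_of_subset_of_nonneg
        · intro n hn
          rw [Fintype.mem_piFinset]
          intro j
          exact Finset.mem_image_of_mem _ hn
        · intro n _ _
          positivity
    _ = ∏ j, ∑ k ∈ t j, Real.exp (-b * ((k : ℝ) - N * y j) ^ 2) :=
        (Finset.prod_univ_sum t fun j k => Real.exp (-b * ((k : ℝ) - N * y j) ^ 2)).symm
    _ ≤ ∏ j : Fin d, (Real.exp 1 * √(Real.pi / (b / 2))) := by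
        apply Finset.prod_le_prod
        · intro j _; positivity
        · intro j _; exact aux_oneD b hb0 hb1 _ _
    _ = _ := by rw [Finset.prod_const, hbe]; simp

lemma aux_sum (d : ℕ) (u₀ : EuclideanSpace ℝ (Fin d) → ℝ) (hu : MemLp u₀ 2 volume)
    (T N : ℝ) (hT : 0 < T) (hN : 0 < N) (S : Finset (Fin d → ℤ)) :
    ∑ n ∈ S, heatSol d u₀ T (latticePt d N n) ^ 2 ≤
      (4 * Real.pi * T) ^ (-(d : ℝ) / 2) *
      ((Real.exp 1 * √(2 * Real.pi * (1 + 4 * (T * N ^ 2)))) ^ d * ∫ y, u₀ y ^ 2) := by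
  have hP : 0 < 4 * Real.pi * T := by positivity
  set P := 4 * Real.pi * T with hPdef
  have hu2 : Integrable (fun y => u₀ y ^ 2) := hu.integrable_sq
  let K : EuclideanSpace ℝ (Fin d) → EuclideanSpace ℝ (Fin d) → ℝ :=
    fun x y => Real.exp (-‖x - y‖ ^ 2 / (4 * T))
  have hform : ∀ x y, K x y = Real.exp (-(1 / (4 * T)) * ‖x - y‖ ^ 2) := by
    intro x y; simp only [K]; congr 1; ring
  have hKint : ∀ x, Integrable (K x) := by
    intro x
    have h0 : Integrable (fun v : EuclideanSpace ℝ (Fin d) =>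
        Real.exp (-(1 / (4 * T)) * ‖v‖ ^ 2)) := by
      have := GaussianFourier.integrable_cexp_neg_mul_sq_norm_add (V := EuclideanSpace ℝ (Fin d))
        (b := ((1 / (4 * T) : ℝ) : ℂ)) (by rw [Complex.ofReal_re]; positivity) 0 0
      refine this.re.congr (Eventually.of_forall fun v => ?_)
      simp only [zero_mul, add_zero]
      rw [← Complex.ofReal_neg, ← Complex.ofReal_pow, ← Complex.ofReal_mul, ← Complex.ofReal_exp]
      rfl
    refine (h0.comp_sub_left x).congr (Eventually.of_forall fun y => ?_)
    exact (hform x y).symm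
  have hKval : ∀ x, ∫ y, K x y = P ^ ((d : ℝ) / 2) := by
    intro x
    simp_rw [hform]
    rw [integral_sub_left_eq_self (fun v : EuclideanSpace ℝ (Fin d) =>
      Real.exp (-(1 / (4 * T)) * ‖v‖ ^ 2)) volume x,
      GaussianFourier.integral_rexp_neg_mul_sq_norm (by positivity)]
    simp only [finrank_euclideanSpace, Fintype.card_fin]
    congr 1
    rw [hPdef]; field_simp
  have hKcont : ∀ x, Continuous (K x) := by intro x; simp only [K]; fun_prop
  have hK1 : ∀ x y, K x y ≤ 1 := by
    intro x y
    simp only [K]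
    rw [Real.exp_le_one_iff, neg_div]
    have : 0 ≤ ‖x - y‖ ^ 2 / (4 * T) := by positivity
    linarith
  have hK0 : ∀ x y, 0 ≤ K x y := fun x y => (Real.exp_pos _).le
  have hKu2 : ∀ x, Integrable (fun y => K x y * u₀ y ^ 2) := by
    intro x
    refine hu2.mono' ((hKcont x).aestronglyMeasurable.mul hu2.1) (Eventually.of_forall fun y => ?_)
    rw [Real.norm_eq_abs, abs_of_nonneg (mul_nonneg (hK0 x y) (sq_nonneg _))]
    exact mul_le_of_le_one_left (sq_nonneg _) (hK1 x y)
  have hKu : ∀ x, Integrable (fun y => K x y * u₀ y) := by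
    intro x
    refine ((hKint x).add (hKu2 x)).mono' ((hKcont x).aestronglyMeasurable.mul hu.1)
      (Eventually.of_forall fun y => ?_)
    rw [Real.norm_eq_abs, abs_mul, abs_of_nonneg (hK0 x y)]
    have : |u₀ y| ≤ 1 + u₀ y ^ 2 := by
      rw [← sq_abs]; nlinarith [sq_nonneg (|u₀ y| - 1), abs_nonneg (u₀ y)]
    have := mul_le_mul_of_nonneg_left this (hK0 x y)
    simp only [Pi.add_apply]
    linarith
  have hCS : ∀ x, (∫ y, K x y * u₀ y) ^ 2 ≤ P ^ ((d : ℝ) / 2) * ∫ y, K x y * u₀ y ^ 2 := by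
    intro x
    set B := ∫ y, K x y * u₀ y
    set A := ∫ y, K x y * u₀ y ^ 2
    set M := P ^ ((d : ℝ) / 2)
    have hM : 0 < M := Real.rpow_pos_of_pos hP _
    have h : 0 ≤ ∫ y, K x y * (u₀ y - B / M) ^ 2 :=
      integral_nonneg fun y => mul_nonneg (hK0 x y) (sq_nonneg _)
    have he : ∫ y, K x y * (u₀ y - B / M) ^ 2 = A - 2 * (B / M) * B + (B / M) ^ 2 * M := by
      have : ∀ y, K x y * (u₀ y - B / M) ^ 2 =
        (K x y * u₀ y ^ 2 - 2 * (B / M) * (K x y * u₀ y)) + (B / M) ^ 2 * K x y := by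
        intro y; ring
      simp_rw [this]
      have hi : Integrable (fun y => K x y * u₀ y ^ 2 - 2 * (B / M) * (K x y * u₀ y)) :=
        (hKu2 x).sub ((hKu x).const_mul _)
      rw [integral_add hi ((hKint x).const_mul _),
        integral_sub (hKu2 x) ((hKu x).const_mul _), integral_const_mul, integral_const_mul, hKval]
    rw [he] at h
    have h5 : A - 2 * (B / M) * B + (B / M) ^ 2 * M = A - B ^ 2 / M := by field_simp; ring
    rw [h5, sub_nonneg, div_le_iff₀ hM] at h
    linarith
  have hpt : ∀ x, heatSol d u₀ T x ^ 2 ≤ P ^ (-(d : ℝ) / 2) * ∫ y, K x y * u₀ y ^ 2 := by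
    intro x
    have hpp : P ^ (-(d : ℝ) / 2) * P ^ ((d : ℝ) / 2) = 1 := by
      rw [← Real.rpow_add hP]; simp [neg_div]
    have := mul_le_mul_of_nonneg_left (hCS x) (sq_nonneg (P ^ (-(d : ℝ) / 2)))
    have h6 : heatSol d u₀ T x = P ^ (-(d : ℝ) / 2) * ∫ y, K x y * u₀ y := rfl
    rw [h6, mul_pow]
    refine this.trans (le_of_eq ?_)
    rw [sq, mul_assoc, ← mul_assoc _ (P ^ ((d : ℝ) / 2)), hpp, one_mul]
  refine (Finset.sum_le_sum fun n _ => hpt _).trans ?_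
  rw [← Finset.mul_sum, ← integral_finsetSum _ fun n _ => hKu2 _]
  refine mul_le_mul_of_nonneg_left ?_ (Real.rpow_nonneg hP.le _)
  rw [← integral_const_mul]
  refine integral_mono (integrable_finsetSum _ fun n _ => hKu2 _) (hu2.const_mul _) fun y => ?_
  simp only
  rw [← Finset.sum_mul]
  exact mul_le_mul_of_nonneg_right (aux_lattice d T N hT hN S y) (sq_nonneg _)

lemma aux_const (d : ℕ) (T M : ℝ) (hT : 0 < T) (hM : 0 < M) :
    (4 * Real.pi * T) ^ (-(d : ℝ) / 2) * (Real.exp 1 * √(2 * Real.pi * (1 + 4 * M))) ^ d ≤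
      (√((Real.exp 1 * √(16 * Real.pi)) ^ d) * (1 + M ^ ((d : ℝ) / 4)) * T ^ (-(d : ℝ) / 4)) ^ 2 := by
  rw [mul_pow _ (T ^ _), mul_pow _ (1 + _), Real.sq_sqrt (by positivity)]
  have hT2 : (T ^ (-(d : ℝ) / 4)) ^ 2 = T ^ (-(d : ℝ) / 2) := by
    rw [← Real.rpow_mul_natCast hT.le]; congr 1; push_cast; ring
  have hM2 : (M ^ ((d : ℝ) / 4)) ^ 2 = √M ^ d := by
    rw [← Real.rpow_mul_natCast hM.le, Real.sqrt_eq_rpow, ← Real.rpow_mul_natCast hM.le]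
    congr 1; push_cast; ring
  rw [hT2, mul_comm]
  have h1 : (4 * Real.pi * T) ^ (-(d : ℝ) / 2) ≤ T ^ (-(d : ℝ) / 2) := by
    apply Real.rpow_le_rpow_of_nonpos hT
    · nlinarith [Real.pi_gt_three]
    · have : (0 : ℝ) ≤ d := Nat.cast_nonneg d
      linarith
  refine mul_le_mul ?_ h1 (by positivity) (by positivity)
  have hm0 : 0 < M ^ ((d : ℝ) / 4) := Real.rpow_pos_of_pos hM _
  rcases le_total M 1 with h | h
  · calc _ ≤ (Real.exp 1 * √(16 * Real.pi)) ^ d * 1 := by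
          have hq : 2 * Real.pi * (1 + 4 * M) ≤ 16 * Real.pi := by nlinarith [Real.pi_pos]
          have hq2 := Real.sqrt_le_sqrt hq
          rw [mul_one]
          exact pow_le_pow_left₀ (by positivity) (mul_le_mul_of_nonneg_left hq2 (by positivity)) d
      _ ≤ _ := by
          apply mul_le_mul_of_nonneg_left _ (by positivity)
          nlinarith
  · calc _ ≤ (Real.exp 1 * √(16 * Real.pi * M)) ^ d := by
          have hq : 2 * Real.pi * (1 + 4 * M) ≤ 16 * Real.pi * M := by nlinarith [Real.pi_pos]
          have hq2 := Real.sqrt_le_sqrt hq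
          exact pow_le_pow_left₀ (by positivity) (mul_le_mul_of_nonneg_left hq2 (by positivity)) d
      _ = (Real.exp 1 * √(16 * Real.pi)) ^ d * (M ^ ((d : ℝ) / 4)) ^ 2 := by
          rw [hM2, Real.sqrt_mul (by positivity), ← mul_assoc, mul_pow (_ * _)]
      _ ≤ _ := by
          apply mul_le_mul_of_nonneg_left _ (by positivity)
          nlinarith

/-- There is `C = C(d) > 0` such that for every `u₀ ∈ L²(ℝ^d)`, `T > 0`, `N > 0`,
`(Σ_{n ∈ ℤ^d} |u(T, n/N)|²)^{1/2} ≤ C (1 + (TN²)^{d/4}) T^{-d/4} ‖u₀‖`. -/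
theorem statement2 (d : ℕ) (hd : 0 < d) :
    ∃ C : ℝ, 0 < C ∧
      ∀ u₀ : EuclideanSpace ℝ (Fin d) → ℝ, MemLp u₀ 2 volume →
      ∀ T N : ℝ, 0 < T → 0 < N →
        (∑' n : Fin d → ℤ, (‖heatSol d u₀ T (latticePt d N n)‖₊ : ℝ≥0∞) ^ 2) ^ ((1 : ℝ) / 2)
          ≤ ENNReal.ofReal
              (C * (1 + (T * N ^ 2) ^ ((d : ℝ) / 4)) * T ^ (-(d : ℝ) / 4) * l2norm d u₀) := by
  refine ⟨√((Real.exp 1 * √(16 * Real.pi)) ^ d), by positivity, ?_⟩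
  intro u₀ hu T N hT hN
  have hl : 0 ≤ l2norm d u₀ := ENNReal.toReal_nonneg
  have hl2 : ∫ y, u₀ y ^ 2 = l2norm d u₀ ^ 2 := by
    unfold l2norm
    rw [hu.eLpNorm_eq_integral_rpow_norm (by norm_num) (by norm_num), ENNReal.toReal_ofReal
      (by positivity)]
    simp only [ENNReal.toReal_ofNat, Real.rpow_ofNat, Real.norm_eq_abs, sq_abs]
    rw [← Real.rpow_mul_natCast (integral_nonneg fun y => sq_nonneg _)]
    norm_num
  set R := √((Real.exp 1 * √(16 * Real.pi)) ^ d) * (1 + (T * N ^ 2) ^ ((d : ℝ) / 4))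
    * T ^ (-(d : ℝ) / 4) * l2norm d u₀ with hR
  have hR0 : 0 ≤ R := by positivity
  have hsum : ∑' n : Fin d → ℤ, (‖heatSol d u₀ T (latticePt d N n)‖₊ : ℝ≥0∞) ^ 2
      ≤ ENNReal.ofReal R ^ 2 := by
    rw [ENNReal.tsum_eq_iSup_sum]
    refine iSup_le fun S => ?_
    have h1 : ∀ n ∈ S, (‖heatSol d u₀ T (latticePt d N n)‖₊ : ℝ≥0∞) ^ 2 =
        ENNReal.ofReal (heatSol d u₀ T (latticePt d N n) ^ 2) := by
      intro n _
      rw [← sq_abs, ENNReal.ofReal_pow (abs_nonneg _), ← Real.norm_eq_abs, ofReal_norm]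
      rfl
    rw [Finset.sum_congr rfl h1, ← ENNReal.ofReal_sum_of_nonneg fun n _ => sq_nonneg _,
      ← ENNReal.ofReal_pow hR0]
    apply ENNReal.ofReal_le_ofReal
    refine (aux_sum d u₀ hu T N hT hN S).trans ?_
    rw [hl2, hR, mul_pow _ (l2norm d u₀), ← mul_assoc]
    exact mul_le_mul_of_nonneg_right (aux_const d T (T * N ^ 2) hT (by positivity)) (sq_nonneg _)
  refine (ENNReal.rpow_le_rpow hsum (by norm_num)).trans (le_of_eq ?_)
  rw [← ENNReal.rpow_natCast, ← ENNReal.rpow_mul]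
  norm_num
end
end

section
/- Given s > d/2, there is a constant C = C(s,d) > 0 such that for every r > 0 and every continuous f ∈ L²(ℝ^d) with ∫_{ℝ^d} (1+|ξ|²)^s |f̂(ξ)|² dξ < ∞, one has (Σ_{n∈ℤ^d} (sup_{x∈Q_r(rn)} |f(x)|)² )^{1/2} ≤ C (1 + r^{-d/2}) (∫_{ℝ^d} (1+|ξ|²)^s |f̂(ξ)|² dξ)^{1/2}. -/
open MeasureTheory Filter Topology Metric ENNReal NNReal

noncomputable section

open Finset in
lemma aux_geo (ρ : ℝ) (h0 : 0 < ρ) (h1 : ρ ≤ 1) (T : Finset ℕ) :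
    ∑ k ∈ T, Real.exp (-ρ * k) ≤ 2 / ρ := by
  have he : ∀ k : ℕ, Real.exp (-ρ * k) = (Real.exp (-ρ)) ^ k := by
    intro k; rw [← Real.exp_nat_mul]; ring_nf
  have hlt : Real.exp (-ρ) < 1 := by simpa using h0
  have hs := summable_geometric_of_lt_one (Real.exp_pos (-ρ)).le hlt
  calc _ = ∑ k ∈ T, (Real.exp (-ρ)) ^ k := by simp only [he]
    _ ≤ ∑' k : ℕ, (Real.exp (-ρ)) ^ k := hs.sum_le_tsum _ (fun _ _ => by positivity)
    _ = (1 - Real.exp (-ρ))⁻¹ := tsum_geometric_of_lt_one (Real.exp_pos (-ρ)).le hlt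
    _ ≤ 2 / ρ := by
      have h3 : Real.exp (-ρ) ≤ 1 - ρ / 2 := by
        have h4 : 1 + ρ ≤ Real.exp ρ := by linarith [Real.add_one_le_exp ρ]
        rw [Real.exp_neg, inv_le_comm₀ (Real.exp_pos _) (by linarith)]
        refine le_trans ?_ h4
        rw [inv_le_iff_one_le_mul₀ (by linarith)]
        nlinarith
      rw [show (2:ℝ)/ρ = (ρ/2)⁻¹ by rw [inv_div]]
      exact inv_anti₀ (by positivity) (by linarith)

lemma aux_geoZ (ρ : ℝ) (h0 : 0 < ρ) (h1 : ρ ≤ 1) (T : Finset ℤ) :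
    ∑ k ∈ T, Real.exp (-ρ * |(k : ℝ)|) ≤ 4 / ρ := by
  classical
  have key : ∀ k : ℤ, Real.exp (-ρ * |(k : ℝ)|) = Real.exp (-ρ * (k.natAbs : ℝ)) := by
    intro k; rw [Nat.cast_natAbs, Int.cast_abs]
  simp only [key]
  rw [← Finset.sum_filter_add_sum_filter_not T (fun k => 0 ≤ k)]
  have a1 : ∑ k ∈ T with 0 ≤ k, Real.exp (-ρ * (k.natAbs : ℝ)) ≤ 2 / ρ := by
    rw [← Finset.sum_image (f := fun n : ℕ => Real.exp (-ρ * (n : ℝ))) (g := Int.natAbs)]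
    · exact aux_geo ρ h0 h1 _
    · intro a ha b hb hab
      simp at ha hb
      omega
  have a2 : ∑ k ∈ T with ¬ 0 ≤ k, Real.exp (-ρ * (k.natAbs : ℝ)) ≤ 2 / ρ := by
    rw [← Finset.sum_image (f := fun n : ℕ => Real.exp (-ρ * (n : ℝ))) (g := Int.natAbs)]
    · exact aux_geo ρ h0 h1 _
    · intro a ha b hb hab
      simp at ha hb
      omega
  calc _ ≤ 2/ρ + 2/ρ := add_le_add a1 a2
    _ = _ := by ring

lemma aux_pt (r ρ y z : ℝ) (k l : ℤ) (h0 : 0 < ρ) (h1 : ρ ≤ 1) (h2 : ρ ≤ r)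
    (hy : |y - r * k| ≤ r) (hz : |z - r * l| ≤ r) :
    Real.exp (-(y - z) ^ 2 / 4) ≤ Real.exp 3 * Real.exp (-ρ * |((l - k : ℤ) : ℝ)|) := by
  rw [← Real.exp_add]
  apply Real.exp_le_exp.2
  have h3 : ρ * (|((l - k : ℤ) : ℝ)| - 2) ≤ |y - z| := by
    rcases le_total (|((l - k : ℤ) : ℝ)|) 2 with h | h
    · have := abs_nonneg (y - z)
      nlinarith
    · have : r * |((l - k : ℤ) : ℝ)| ≤ |y - z| + 2 * r := by
        rw [← abs_of_pos (h0.trans_le h2), ← abs_mul, abs_of_pos (h0.trans_le h2)]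
        push_cast
        rw [abs_le] at hy hz
        have := abs_le.1 (le_refl |y - z|)
        rw [abs_le]
        constructor <;> nlinarith
      nlinarith
  have h4 : |y - z| ≤ (y - z)^2/4 + 1 := by
    rw [← sq_abs (y - z)]
    nlinarith [sq_nonneg (|y - z| - 2)]
  linarith

lemma aux_count (d : ℕ) (r ρ : ℝ) (h0 : 0 < ρ) (h1 : ρ ≤ 1) (h2 : ρ ≤ r)
    (x : (Fin d → ℤ) → EuclideanSpace ℝ (Fin d)) (hx : ∀ n j, |x n j - r * n j| ≤ r)
    (S : Finset (Fin d → ℤ)) (n : Fin d → ℤ) :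
    ∑ m ∈ S, Real.exp (-‖x n - x m‖ ^ 2 / 4) ≤ (Real.exp 3 * (4 / ρ)) ^ d := by
  classical
  let T : Fin d → Finset ℤ := fun j => S.image (fun m => m j)
  have hS : S ⊆ Fintype.piFinset T := by
    intro m hm
    rw [Fintype.mem_piFinset]
    intro j
    exact Finset.mem_image_of_mem _ hm
  calc _ ≤ ∑ m ∈ S, ∏ j, (Real.exp 3 * Real.exp (-ρ * |((m j - n j : ℤ) : ℝ)|)) := by
        apply Finset.sum_le_sum
        intro m _
        rw [EuclideanSpace.norm_sq_eq]
        rw [← Finset.sum_neg_distrib, Finset.sum_div, Real.exp_sum]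
        apply Finset.prod_le_prod
        · intros; positivity
        · intro j _
          have := aux_pt r ρ (x n j) (x m j) (n j) (m j) h0 h1 h2 (hx n j) (hx m j)
          simpa using this
    _ ≤ ∑ m ∈ Fintype.piFinset T, ∏ j, (Real.exp 3 * Real.exp (-ρ * |((m j - n j : ℤ) : ℝ)|)) :=
        Finset.sum_le_sum_of_subset_of_nonneg hS (fun _ _ _ => by positivity)
    _ = ∏ j, ∑ k ∈ T j, (Real.exp 3 * Real.exp (-ρ * |((k - n j : ℤ) : ℝ)|)) := by
        rw [Finset.prod_univ_sum]
    _ ≤ ∏ j : Fin d, (Real.exp 3 * (4 / ρ)) := by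
        apply Finset.prod_le_prod
        · intros; positivity
        · intro j _
          rw [← Finset.mul_sum]
          gcongr
          rw [← Finset.sum_image (f := fun k : ℤ => Real.exp (-ρ * |(k : ℝ)|))
            (g := fun k : ℤ => k - n j)]
          · exact aux_geoZ ρ h0 h1 _
          · intro a _ b _ hab
            simpa using hab
    _ = _ := by simp

open scoped RealInnerProductSpace in
lemma aux_gauss_s7 (d : ℕ) {ι : Type*} (S : Finset ι) (a : ι → ℂ) (x : ι → EuclideanSpace ℝ (Fin d))
    (b B : ℝ) (hb : 0 < b)
    (hB : ∀ n ∈ S, ∑ m ∈ S, Real.exp (-‖x n - x m‖ ^ 2 / (4 * b)) ≤ B) :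
    ∫⁻ ξ : EuclideanSpace ℝ (Fin d), ENNReal.ofReal (Real.exp (-b * ‖ξ‖ ^ 2) *
      ‖∑ n ∈ S, a n * Complex.exp (Complex.I * ((inner ℝ (x n) ξ : ℝ) : ℂ))‖ ^ 2) ≤
    ENNReal.ofReal ((Real.pi / b) ^ ((d : ℝ) / 2) * (B * ∑ n ∈ S, ‖a n‖ ^ 2)) := by
  have hbr : 0 < (b : ℂ).re := by simpa using hb
  have hpt : ∀ ξ : EuclideanSpace ℝ (Fin d), ((Real.exp (-b * ‖ξ‖ ^ 2) *
      ‖∑ n ∈ S, a n * Complex.exp (Complex.I * ((inner ℝ (x n) ξ : ℝ) : ℂ))‖ ^ 2 : ℝ) : ℂ) =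
      ∑ n ∈ S, ∑ m ∈ S, (a n * (starRingEnd ℂ) (a m)) *
        Complex.exp (-(b : ℂ) * ‖ξ‖ ^ 2 + Complex.I * ((inner ℝ (x n - x m) ξ : ℝ) : ℂ)) := by
    intro ξ
    rw [Complex.ofReal_mul, Complex.ofReal_pow, ← Complex.mul_conj', map_sum,
      Finset.sum_mul_sum, Finset.mul_sum]
    refine Finset.sum_congr rfl fun n _ => ?_
    rw [Finset.mul_sum]
    refine Finset.sum_congr rfl fun m _ => ?_
    rw [map_mul, ← Complex.exp_conj, inner_sub_left, Complex.exp_add]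
    simp only [map_mul, Complex.conj_I, Complex.conj_ofReal, Complex.ofReal_sub, mul_sub,
      Complex.ofReal_exp]
    rw [sub_eq_add_neg, Complex.exp_add]
    push_cast
    ring_nf
  have hint : ∀ n m, Integrable (fun ξ : EuclideanSpace ℝ (Fin d) =>
      (a n * (starRingEnd ℂ) (a m)) *
        Complex.exp (-(b : ℂ) * ‖ξ‖ ^ 2 + Complex.I * ((inner ℝ (x n - x m) ξ : ℝ) : ℂ))) :=
    fun n m => (GaussianFourier.integrable_cexp_neg_mul_sq_norm_add hbr Complex.I _).const_mul _
  have hInt : Integrable (fun ξ : EuclideanSpace ℝ (Fin d) => ((Real.exp (-b * ‖ξ‖ ^ 2) *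
      ‖∑ n ∈ S, a n * Complex.exp (Complex.I * ((inner ℝ (x n) ξ : ℝ) : ℂ))‖ ^ 2 : ℝ) : ℂ)) := by
    simp only [hpt]
    exact integrable_finsetSum _ fun n _ => integrable_finsetSum _ fun m _ => hint n m
  have hIntR := hInt.re
  simp only [RCLike.re_to_complex, Complex.ofReal_re] at hIntR
  rw [← ofReal_integral_eq_lintegral_ofReal hIntR (ae_of_all _ fun _ => by positivity)]
  apply ENNReal.ofReal_le_ofReal
  have hpos : (0:ℝ) < Real.pi / b := by positivity
  have hval : ∀ n m, ∫ ξ : EuclideanSpace ℝ (Fin d), (a n * (starRingEnd ℂ) (a m)) *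
        Complex.exp (-(b : ℂ) * ‖ξ‖ ^ 2 + Complex.I * ((inner ℝ (x n - x m) ξ : ℝ) : ℂ)) =
      (a n * (starRingEnd ℂ) (a m)) *
        (((Real.pi / b) ^ ((d : ℝ) / 2) * Real.exp (-‖x n - x m‖ ^ 2 / (4 * b)) : ℝ) : ℂ) := by
    intro n m
    rw [integral_const_mul, GaussianFourier.integral_cexp_neg_mul_sq_norm_add hbr]
    rw [Complex.ofReal_mul, Complex.ofReal_cpow hpos.le, Complex.I_sq]
    push_cast
    simp
  have hI : ((∫ ξ : EuclideanSpace ℝ (Fin d), (Real.exp (-b * ‖ξ‖ ^ 2) *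
      ‖∑ n ∈ S, a n * Complex.exp (Complex.I * ((inner ℝ (x n) ξ : ℝ) : ℂ))‖ ^ 2) : ℝ) : ℂ) =
      ∑ n ∈ S, ∑ m ∈ S, (a n * (starRingEnd ℂ) (a m)) *
        (((Real.pi / b) ^ ((d : ℝ) / 2) * Real.exp (-‖x n - x m‖ ^ 2 / (4 * b)) : ℝ) : ℂ) := by
    rw [← integral_complex_ofReal]
    simp only [hpt]
    rw [integral_finsetSum _ fun n _ => integrable_finsetSum _ fun m _ => hint n m]
    refine Finset.sum_congr rfl fun n _ => ?_
    rw [integral_finsetSum _ fun m _ => hint n m]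
    exact Finset.sum_congr rfl fun m _ => hval n m
  set E : ι → ι → ℝ := fun n m => Real.exp (-‖x n - x m‖ ^ 2 / (4 * b)) with hE
  have hsym : ∀ n m, E n m = E m n := by
    intro n m; simp only [hE]; rw [norm_sub_rev]
  have hE0 : ∀ n m, 0 ≤ E n m := fun n m => (Real.exp_pos _).le
  calc _ ≤ ‖((∫ ξ : EuclideanSpace ℝ (Fin d), (Real.exp (-b * ‖ξ‖ ^ 2) *
      ‖∑ n ∈ S, a n * Complex.exp (Complex.I * ((inner ℝ (x n) ξ : ℝ) : ℂ))‖ ^ 2) : ℝ) : ℂ)‖ := by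
        rw [Complex.norm_real]; exact le_abs_self _
    _ ≤ ∑ n ∈ S, ∑ m ∈ S, (Real.pi / b) ^ ((d : ℝ) / 2) *
          ((‖a n‖ ^ 2 * E n m + ‖a m‖ ^ 2 * E m n) / 2) := by
        rw [hI]
        refine (norm_sum_le _ _).trans (Finset.sum_le_sum fun n _ => ?_)
        refine (norm_sum_le _ _).trans (Finset.sum_le_sum fun m _ => ?_)
        rw [norm_mul, norm_mul, RCLike.norm_conj, Complex.norm_real, Real.norm_of_nonneg
          (by positivity), hsym m n]
        have h1 : ‖a n‖ * ‖a m‖ ≤ (‖a n‖ ^ 2 + ‖a m‖ ^ 2) / 2 := by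
          nlinarith [sq_nonneg (‖a n‖ - ‖a m‖)]
        have h2 := hE0 n m
        have h3 : 0 ≤ (Real.pi / b) ^ ((d : ℝ) / 2) * E n m := by positivity
        calc _ ≤ (‖a n‖ ^ 2 + ‖a m‖ ^ 2) / 2 * ((Real.pi / b) ^ ((d : ℝ) / 2) * E n m) :=
              mul_le_mul_of_nonneg_right h1 h3
          _ = _ := by ring
    _ = (Real.pi / b) ^ ((d : ℝ) / 2) * ∑ n ∈ S, ‖a n‖ ^ 2 * ∑ m ∈ S, E n m := by
        simp only [← Finset.mul_sum, ← Finset.sum_div, Finset.sum_add_distrib]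
        rw [Finset.sum_comm (f := fun n m => ‖a m‖ ^ 2 * E m n)]
        simp only [← Finset.mul_sum]
        ring
    _ ≤ _ := by
        gcongr
        rw [Finset.mul_sum]
        refine Finset.sum_le_sum fun n hn => ?_
        rw [mul_comm]
        exact mul_le_mul_of_nonneg_right (hB n hn) (by positivity)

lemma aux_weight_pt (s : ℝ) (hs : 0 < s) (u Y : ℝ) (hu : 0 ≤ u) (hY : 0 ≤ Y) :
    ENNReal.ofReal ((1 + u) ^ (-s) * Y) ≤ ∑' k : ℕ, ENNReal.ofReal (Real.exp 4 * ((4:ℝ) ^ (-s)) ^ k) *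
      ENNReal.ofReal (Real.exp (-(1 / (4:ℝ) ^ k) * u) * Y) := by
  obtain ⟨k, hk1, hk2⟩ := exists_nat_pow_near (x := 1 + u) (y := (4:ℝ)) (by linarith) (by norm_num)
  refine le_trans ?_ (ENNReal.le_tsum k)
  rw [← ENNReal.ofReal_mul (by positivity)]
  apply ENNReal.ofReal_le_ofReal
  rw [← mul_assoc]
  apply mul_le_mul_of_nonneg_right _ hY
  have h1 : (1 + u) ^ (-s) ≤ ((4:ℝ) ^ (-s)) ^ k := by
    rw [← Real.rpow_natCast, ← Real.rpow_mul (by norm_num), mul_comm (-s), Real.rpow_mul (by norm_num),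
      Real.rpow_natCast]
    exact Real.rpow_le_rpow_of_nonpos (by positivity) hk1 (by linarith)
  have h2 : 1 ≤ Real.exp 4 * Real.exp (-(1 / (4:ℝ) ^ k) * u) := by
    rw [← Real.exp_add]
    apply Real.one_le_exp
    have : u / 4 ^ k ≤ 4 := by
      rw [div_le_iff₀ (by positivity)]
      rw [pow_succ] at hk2
      linarith
    have h3 : -(1 / (4:ℝ) ^ k) * u = - (u / 4 ^ k) := by ring
    linarith
  have h3 : 0 ≤ ((4:ℝ) ^ (-s)) ^ k := by positivity
  calc _ ≤ ((4:ℝ) ^ (-s)) ^ k * 1 := by linarith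
    _ ≤ ((4:ℝ) ^ (-s)) ^ k * (Real.exp 4 * Real.exp (-(1 / (4:ℝ) ^ k) * u)) :=
      mul_le_mul_of_nonneg_left h2 h3
    _ = _ := by ring

lemma aux_weight (d : ℕ) (s : ℝ) (hs : (d : ℝ) / 2 < s) : ∃ D : ℝ, 0 < D ∧
    ∀ {ι : Type} (S : Finset ι) (a : ι → ℂ) (x : ι → EuclideanSpace ℝ (Fin d)) (B : ℝ),
    0 ≤ B → (∀ n ∈ S, ∑ m ∈ S, Real.exp (-‖x n - x m‖ ^ 2 / 4) ≤ B) →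
    ∫⁻ ξ : EuclideanSpace ℝ (Fin d), ENNReal.ofReal ((1 + ‖ξ‖ ^ 2) ^ (-s) *
      ‖∑ n ∈ S, a n * Complex.exp (Complex.I * ((inner ℝ (x n) ξ : ℝ) : ℂ))‖ ^ 2) ≤
    ENNReal.ofReal (D * (B * ∑ n ∈ S, ‖a n‖ ^ 2)) := by
  have hs0 : 0 < s := lt_of_le_of_lt (by positivity) hs
  set q : ℝ := (4:ℝ) ^ ((d:ℝ)/2 - s) with hq
  have hq0 : 0 < q := by positivity
  have hq1 : q < 1 := Real.rpow_lt_one_of_one_lt_of_neg (by norm_num) (by linarith)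
  have hsum := (summable_geometric_of_lt_one hq0.le hq1).mul_left (Real.exp 4 * Real.pi ^ ((d:ℝ)/2))
  refine ⟨∑' k : ℕ, Real.exp 4 * Real.pi ^ ((d:ℝ)/2) * q ^ k, ?_, ?_⟩
  · exact hsum.tsum_pos (fun _ => by positivity) 0 (by positivity)
  intro ι S a x B hB0 hB
  set P : EuclideanSpace ℝ (Fin d) → ℂ := fun ξ =>
    ∑ n ∈ S, a n * Complex.exp (Complex.I * ((inner ℝ (x n) ξ : ℝ) : ℂ)) with hP
  have hPc : Continuous P := by fun_prop
  calc _ ≤ ∫⁻ ξ : EuclideanSpace ℝ (Fin d), ∑' k : ℕ, ENNReal.ofReal (Real.exp 4 * ((4:ℝ) ^ (-s)) ^ k) *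
      ENNReal.ofReal (Real.exp (-(1 / (4:ℝ) ^ k) * ‖ξ‖ ^ 2) * ‖P ξ‖ ^ 2) :=
        lintegral_mono fun ξ => aux_weight_pt s hs0 _ _ (by positivity) (by positivity)
    _ = ∑' k : ℕ, ENNReal.ofReal (Real.exp 4 * ((4:ℝ) ^ (-s)) ^ k) *
        ∫⁻ ξ : EuclideanSpace ℝ (Fin d), 
          ENNReal.ofReal (Real.exp (-(1 / (4:ℝ) ^ k) * ‖ξ‖ ^ 2) * ‖P ξ‖ ^ 2) := by
        rw [lintegral_tsum]
        · congr 1; ext k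
          rw [lintegral_const_mul]
          apply Measurable.ennreal_ofReal
          exact (by fun_prop : Continuous fun ξ : EuclideanSpace ℝ (Fin d) => 
            Real.exp (-(1 / (4:ℝ) ^ k) * ‖ξ‖ ^ 2) * ‖P ξ‖ ^ 2).measurable
        · intro k
          apply AEMeasurable.const_mul
          apply Measurable.aemeasurable
          apply Measurable.ennreal_ofReal
          exact (by fun_prop : Continuous fun ξ : EuclideanSpace ℝ (Fin d) => 
            Real.exp (-(1 / (4:ℝ) ^ k) * ‖ξ‖ ^ 2) * ‖P ξ‖ ^ 2).measurable
    _ ≤ ∑' k : ℕ, ENNReal.ofReal (Real.exp 4 * Real.pi ^ ((d:ℝ)/2) * q ^ k) *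
          ENNReal.ofReal (B * ∑ n ∈ S, ‖a n‖ ^ 2) := by
        apply ENNReal.tsum_le_tsum
        intro k
        have h4 : (1:ℝ) ≤ 4 ^ k := one_le_pow₀ (by norm_num)
        have := aux_gauss_s7 d S a x (1 / 4 ^ k) B (by positivity) (by
          intro n hn
          refine le_trans (Finset.sum_le_sum fun m _ => ?_) (hB n hn)
          apply Real.exp_le_exp.2
          rw [neg_div, neg_div, neg_le_neg_iff]
          apply div_le_div_of_nonneg_left (by positivity) (by positivity)
          have : 1 / (4:ℝ) ^ k ≤ 1 := by rw [div_le_one (by positivity)]; exact h4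
          linarith)
        refine (mul_le_mul_right this _).trans (le_of_eq ?_)
        rw [← ENNReal.ofReal_mul (by positivity), ← ENNReal.ofReal_mul (by positivity)]
        congr 1
        have e1 : (Real.pi / (1 / (4:ℝ) ^ k)) ^ ((d:ℝ)/2) = Real.pi ^ ((d:ℝ)/2) * (4 ^ ((d:ℝ)/2)) ^ k := by
          rw [div_div_eq_mul_div, div_one, Real.mul_rpow Real.pi_pos.le (by positivity)]
          congr 1
          rw [← Real.rpow_natCast, ← Real.rpow_mul (by norm_num), mul_comm, Real.rpow_mul (by norm_num),
            Real.rpow_natCast]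
        have e2 : q ^ k = (4 ^ ((d:ℝ)/2)) ^ k * ((4:ℝ) ^ (-s)) ^ k := by
          rw [← mul_pow, hq, ← Real.rpow_add (by norm_num), sub_eq_add_neg]
        rw [e1, e2]
        ring
    _ = _ := by
        rw [ENNReal.tsum_mul_right, ← ENNReal.ofReal_tsum_of_nonneg (fun _ => by positivity) hsum,
          ← ENNReal.ofReal_mul (tsum_nonneg fun _ => by positivity)]

lemma aux_lim {d : ℕ} {T : ℝ → EuclideanSpace ℝ (Fin d) → ℂ} {fhat θ : EuclideanSpace ℝ (Fin d) → ℂ}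
    (hTm : ∀ R, AEStronglyMeasurable (T R) volume) (hm : MemLp fhat 2 volume)
    (ht : Tendsto (fun R : ℝ => eLpNorm (fun ξ => fhat ξ - T R ξ) 2 volume) atTop (𝓝 0))
    (hθ2' : MemLp θ 2 volume) :
    Tendsto (fun R => ∫ ξ, T R ξ * θ ξ) atTop (𝓝 (∫ ξ, fhat ξ * θ ξ)) := by
  have hdiff : ∀ R, AEStronglyMeasurable (fun ξ => fhat ξ - T R ξ) volume :=
    fun R => hm.1.sub (hTm R)
  apply tendsto_integral_of_L1' (fun ξ => fhat ξ * θ ξ) (hm.integrable_mul hθ2').1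
  · have hev : ∀ᶠ R in atTop, eLpNorm (fun ξ => fhat ξ - T R ξ) 2 volume < ⊤ :=
      ht.eventually (gt_mem_nhds ENNReal.zero_lt_top)
    filter_upwards [hev] with R hR
    have : MemLp (T R) 2 volume := by
      have h5 := hm.sub (⟨hdiff R, hR⟩ : MemLp (fun ξ => fhat ξ - T R ξ) 2 volume)
      refine (memLp_congr_ae (ae_of_all _ fun ξ => ?_)).1 h5
      simp
    exact this.integrable_mul hθ2'
  · have hb : Tendsto (fun R => eLpNorm θ 2 volume * eLpNorm (fun ξ => fhat ξ - T R ξ) 2 volume)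
        atTop (𝓝 0) := by
      have := ENNReal.Tendsto.const_mul (a := eLpNorm θ 2 volume) ht (Or.inr hθ2'.2.ne)
      simpa using this
    refine tendsto_of_tendsto_of_tendsto_of_le_of_le tendsto_const_nhds hb (fun _ => zero_le) ?_
    intro R
    have h6 := eLpNorm_smul_le_mul_eLpNorm (p := 2) (q := 2) (r := 1) (hdiff R) hθ2'.1
    have h7 : ((fun ξ => T R ξ * θ ξ) - fun ξ => fhat ξ * θ ξ) =
        -(θ • (fun ξ => fhat ξ - T R ξ)) := by
      ext ξ
      simp only [Pi.neg_apply, Pi.sub_apply, Pi.mul_apply, smul_eq_mul]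
      ring
    beta_reduce
    rw [h7, eLpNorm_neg]
    exact h6

open scoped FourierTransform ContDiff in
lemma aux_inv_s7 (d : ℕ) (f fhat : EuclideanSpace ℝ (Fin d) → ℂ) (hc : Continuous f)
    (h2 : MemLp f 2 volume) (hF : IsL2Fourier d f fhat) (h1 : Integrable fhat volume)
    (x : EuclideanSpace ℝ (Fin d)) :
    f x = (((2 * Real.pi) ^ (-(d : ℝ) / 2) : ℝ) : ℂ) *
      ∫ ξ, Complex.exp (Complex.I * ((inner ℝ x ξ : ℝ) : ℂ)) * fhat ξ := by
  set c : ℂ := (((2 * Real.pi) ^ (-(d : ℝ) / 2) : ℝ) : ℂ) with hcdef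
  let L : EuclideanSpace ℝ (Fin d) →ₗ[ℝ] EuclideanSpace ℝ (Fin d) →ₗ[ℝ] ℝ := (1 / (2 * Real.pi)) • innerₗ (EuclideanSpace ℝ (Fin d))
  have hLc : Continuous fun p : EuclideanSpace ℝ (Fin d) × EuclideanSpace ℝ (Fin d) => L p.1 p.2 := by
    simp only [L, LinearMap.smul_apply, innerₗ_apply_apply]
    fun_prop
  have hLc' : Continuous fun p : EuclideanSpace ℝ (Fin d) × EuclideanSpace ℝ (Fin d) => (-L) p.1 p.2 := by
    simp only [LinearMap.neg_apply]
    exact hLc.neg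
  have hLflip : L.flip = L := by
    ext u v
    simp [L, real_inner_comm]
  have hLflip' : (-L).flip = -L := by
    ext u v
    simp [L, real_inner_comm]
  have hpi : (Real.pi : ℂ) ≠ 0 := by exact_mod_cast Real.pi_ne_zero
  have hV : ∀ (g : EuclideanSpace ℝ (Fin d) → ℂ) (ξ : EuclideanSpace ℝ (Fin d)), VectorFourier.fourierIntegral Real.fourierChar volume L g ξ =
      ∫ x, Complex.exp (-(Complex.I * ((inner ℝ x ξ : ℝ) : ℂ))) * g x := by
    intro g ξ
    unfold VectorFourier.fourierIntegral
    congr 1; ext y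
    rw [Circle.smul_def, Real.fourierChar_apply, smul_eq_mul]
    congr 2
    simp [L]
    field_simp
  have hV' : ∀ (g : EuclideanSpace ℝ (Fin d) → ℂ) (ξ : EuclideanSpace ℝ (Fin d)), VectorFourier.fourierIntegral Real.fourierChar volume (-L) g ξ =
      ∫ x, Complex.exp (Complex.I * ((inner ℝ x ξ : ℝ) : ℂ)) * g x := by
    intro g ξ
    unfold VectorFourier.fourierIntegral
    congr 1; ext y
    rw [Circle.smul_def, Real.fourierChar_apply, smul_eq_mul]
    congr 2
    simp [L]
    field_simp
  set h : EuclideanSpace ℝ (Fin d) → ℂ := fun x => c * VectorFourier.fourierIntegral Real.fourierChar volume (-L) fhat x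
    with hh
  have hhc : Continuous h := by
    apply continuous_const.mul
    exact VectorFourier.fourierIntegral_continuous Real.continuous_fourierChar hLc' h1
  suffices hfh : f = h by
    rw [hfh]
    simp only [hh, hV']
    congr 2; ext ξ; rw [real_inner_comm]
  rw [← Continuous.ae_eq_iff_eq volume hc hhc]
  apply ae_eq_of_integral_contDiff_smul_eq hc.locallyIntegrable hhc.locallyIntegrable
  intro φ0 hφ hφc
  -- complex Schwartz version
  have hφ' : ContDiff ℝ ∞ (fun x => (φ0 x : ℂ)) := Complex.ofRealCLM.contDiff.comp hφ
  have hφc' : HasCompactSupport (fun x => (φ0 x : ℂ)) := 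
    hφc.comp_left (g := fun t : ℝ => (t : ℂ)) (by simp)
  let φ : SchwartzMap (EuclideanSpace ℝ (Fin d)) ℂ := hφc'.toSchwartzMap hφ'
  have hφv : ∀ x, φ x = (φ0 x : ℂ) := fun x => rfl
  let e : EuclideanSpace ℝ (Fin d) ≃L[ℝ] EuclideanSpace ℝ (Fin d) := ContinuousLinearEquiv.smulLeft (Units.mk0 (1 / (2 * Real.pi)) (by positivity))
  obtain ⟨ψ, hψ⟩ : ∃ ψ : SchwartzMap (EuclideanSpace ℝ (Fin d)) ℂ, ψ = 𝓕⁻ φ := ⟨_, rfl⟩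
  let θ : SchwartzMap (EuclideanSpace ℝ (Fin d)) ℂ := SchwartzMap.compCLMOfContinuousLinearEquiv ℂ e ψ
  have he : ∀ ξ, e ξ = (1 / (2 * Real.pi)) • ξ := fun ξ => rfl
  have hθ : ∀ ξ, θ ξ = VectorFourier.fourierIntegral Real.fourierChar volume (-L) φ ξ := by
    intro ξ
    rw [hV']
    change ψ (e ξ) = _
    rw [hψ, SchwartzMap.fourierInv_coe, Real.fourierInv_eq', he]
    congr 1; ext y
    rw [smul_eq_mul, inner_smul_right]
    congr 2
    push_cast
    field_simp
  have hθ2 : ∀ y, VectorFourier.fourierIntegral Real.fourierChar volume L θ y =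
      (((2 * Real.pi) ^ d : ℝ) : ℂ) * φ y := by
    intro y
    rw [hV]
    have : ∀ ξ : EuclideanSpace ℝ (Fin d), Complex.exp (-(Complex.I * ((inner ℝ ξ y : ℝ) : ℂ))) * θ ξ =
        (fun η : EuclideanSpace ℝ (Fin d) => Complex.exp (-(2 * Real.pi * Complex.I * ((inner ℝ η y : ℝ) : ℂ))) * ψ η)
          ((1 / (2 * Real.pi)) • ξ) := by
      intro ξ
      change _ * ψ (e ξ) = _
      rw [he]
      simp only
      rw [inner_smul_left]
      congr 2
      simp
      field_simp
    rw [integral_congr_ae (ae_of_all _ this)]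
    rw [Measure.integral_comp_smul volume (fun η : EuclideanSpace ℝ (Fin d) => Complex.exp (-(2 * Real.pi * Complex.I * ((inner ℝ η y : ℝ) : ℂ))) * ψ η) (1 / (2 * Real.pi))]
    have h3 : φ y = 𝓕 ψ y := by rw [hψ, FourierTransform.fourier_fourierInv_eq]
    rw [h3, SchwartzMap.fourier_coe, Real.fourier_eq', finrank_euclideanSpace_fin, Complex.real_smul]
    congr 1
    · rw [one_div, inv_pow, inv_inv, abs_of_pos (by positivity)]
    · congr 1; ext v
      rw [smul_eq_mul]
      congr 2
      push_cast
      ring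
  have hθ2' : MemLp θ 2 volume := θ.memLp 2 volume
  have hc2 : c * c * (((2 * Real.pi) ^ d : ℝ) : ℂ) = 1 := by
    rw [hcdef, ← Complex.ofReal_mul, ← Complex.ofReal_mul, ← Real.rpow_add (by positivity),
      ← Real.rpow_natCast, ← Real.rpow_add (by positivity)]
    ring_nf
    simp
  -- truncations
  have hfi : ∀ R, Integrable ((closedBall (0:EuclideanSpace ℝ (Fin d)) R).indicator f) volume := fun R =>
    (hc.continuousOn.integrableOn_compact (isCompact_closedBall 0 R)).integrable_indicator
        measurableSet_closedBall
  have e1 : ∀ R ξ, truncFT d f R ξ = c * VectorFourier.fourierIntegral Real.fourierChar volume L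
      ((closedBall (0:EuclideanSpace ℝ (Fin d)) R).indicator f) ξ := by
    intro R ξ
    rw [hV]
    unfold truncFT
    rw [← integral_indicator measurableSet_closedBall]
    congr 2; ext y
    by_cases hy : y ∈ closedBall (0:EuclideanSpace ℝ (Fin d)) R <;> simp [hy]
  have htr : ∀ R, ∫ ξ, truncFT d f R ξ * θ ξ = 
      c * (((2 * Real.pi) ^ d : ℝ) : ℂ) * ∫ y in closedBall (0 : EuclideanSpace ℝ (Fin d)) R, f y * φ y := by
    intro R
    have key := VectorFourier.integral_fourierIntegral_smul_eq_flip (L := L) (μ := volume) (ν := volume)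
      Real.continuous_fourierChar hLc (hfi R) (θ.integrable (μ := volume))
    rw [hLflip] at key
    simp only [hθ2, smul_eq_mul] at key
    simp only [e1, mul_assoc]
    rw [integral_const_mul, key]
    rw [← integral_indicator measurableSet_closedBall]
    simp only [← integral_const_mul]
    congr 1; ext y
    by_cases hy : y ∈ closedBall (0:EuclideanSpace ℝ (Fin d)) R
    · rw [Set.indicator_of_mem hy, Set.indicator_of_mem hy]; ring
    · rw [Set.indicator_of_notMem hy, Set.indicator_of_notMem hy]; ring
  have hfφ : Integrable (fun y => f y * φ y) volume := by
    have : Continuous (fun y => f y * φ y) := hc.mul φ.continuous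
    exact this.integrable_of_hasCompactSupport (hφc'.mul_left)
  have lim1 : Tendsto (fun R => ∫ ξ, truncFT d f R ξ * θ ξ) atTop
      (𝓝 (c * (((2 * Real.pi) ^ d : ℝ) : ℂ) * ∫ y, f y * φ y)) := by
    simp only [htr]
    apply Filter.Tendsto.const_mul
    have := (aecover_closedBall (μ := (volume : Measure (EuclideanSpace ℝ (Fin d)))) (x := 0) (r := id) (l := atTop) tendsto_id).integral_tendsto_of_countably_generated hfφ
    simpa using this
  have lim2 : Tendsto (fun R => ∫ ξ, truncFT d f R ξ * θ ξ) atTop (𝓝 (∫ ξ, fhat ξ * θ ξ)) := by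
    obtain ⟨hm, ht⟩ := hF
    have hTm : ∀ R, AEStronglyMeasurable (truncFT d f R) volume := by
      intro R
      have : truncFT d f R = fun ξ => c * VectorFourier.fourierIntegral Real.fourierChar volume L
        ((closedBall (0:EuclideanSpace ℝ (Fin d)) R).indicator f) ξ := funext (e1 R)
      rw [this]
      exact (continuous_const.mul (VectorFourier.fourierIntegral_continuous
        Real.continuous_fourierChar hLc (hfi R))).aestronglyMeasurable
    exact aux_lim hTm hm ht hθ2'
  have heq := tendsto_nhds_unique lim1 lim2
  have key2 := VectorFourier.integral_fourierIntegral_smul_eq_flip (L := -L) (μ := volume) (ν := volume)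
      Real.continuous_fourierChar hLc' (φ.integrable (μ := volume)) h1
  rw [hLflip'] at key2
  simp only [← hθ, smul_eq_mul] at key2
  simp only [Complex.real_smul, ← hφv, hh]
  calc ∫ y, φ y * f y = c * (c * (((2 * Real.pi) ^ d : ℝ) : ℂ) * ∫ y, f y * φ y) := by
        rw [← mul_assoc, ← mul_assoc, hc2, one_mul]
        congr 1; ext y; ring
    _ = c * ∫ ξ, θ ξ * fhat ξ := by
        rw [heq]
        congr 2; ext y; ring
    _ = _ := by
        rw [key2, ← integral_const_mul]
        congr 1; ext y; ring

lemma aux_core (d : ℕ) (s : ℝ) (D B : ℝ) (hD : 0 < D) (hB : 0 < B)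
    (f fhat : EuclideanSpace ℝ (Fin d) → ℂ) (hc : Continuous f) (h2 : MemLp f 2 volume)
    (hF : IsL2Fourier d f fhat)
    (hA : Integrable (fun ξ => (1 + ‖ξ‖ ^ 2) ^ s * ‖fhat ξ‖ ^ 2) volume)
    (hW : ∀ {ι : Type} (S : Finset ι) (a : ι → ℂ) (x : ι → EuclideanSpace ℝ (Fin d)) (B : ℝ),
    0 ≤ B → (∀ n ∈ S, ∑ m ∈ S, Real.exp (-‖x n - x m‖ ^ 2 / 4) ≤ B) →
    ∫⁻ ξ : EuclideanSpace ℝ (Fin d), ENNReal.ofReal ((1 + ‖ξ‖ ^ 2) ^ (-s) *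
      ‖∑ n ∈ S, a n * Complex.exp (Complex.I * ((inner ℝ (x n) ξ : ℝ) : ℂ))‖ ^ 2) ≤
    ENNReal.ofReal (D * (B * ∑ n ∈ S, ‖a n‖ ^ 2)))
    (S : Finset (Fin d → ℤ)) (x : (Fin d → ℤ) → EuclideanSpace ℝ (Fin d))
    (hx : ∀ n ∈ S, ∑ m ∈ S, Real.exp (-‖x n - x m‖ ^ 2 / 4) ≤ B) :
    ∑ n ∈ S, ‖f (x n)‖ ^ 2 ≤ ((2 * Real.pi) ^ (-(d : ℝ) / 2)) ^ 2 * D * B *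
      ∫ ξ, (1 + ‖ξ‖ ^ 2) ^ s * ‖fhat ξ‖ ^ 2 := by
  have hw : ∀ ξ : EuclideanSpace ℝ (Fin d), 0 < (1 + ‖ξ‖ ^ 2) ^ s := fun ξ => by positivity
  have hwn : ∀ ξ : EuclideanSpace ℝ (Fin d), (1 + ‖ξ‖ ^ 2) ^ (-s) = ((1 + ‖ξ‖ ^ 2) ^ s)⁻¹ :=
    fun ξ => Real.rpow_neg (by positivity) s
  have hcw : Continuous fun ξ : EuclideanSpace ℝ (Fin d) => (1 + ‖ξ‖ ^ 2) ^ (-s) :=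
    Continuous.rpow_const (by fun_prop) (fun ξ => Or.inl (by positivity))
  -- general AM-GM
  have amgm : ∀ (l w u v : ℝ), 0 < l → 0 < w →
      u * v ≤ (l * (w * u ^ 2) + l⁻¹ * (w⁻¹ * v ^ 2)) / 2 := by
    intro l w u v hl hw
    have h : 0 ≤ (l * w)⁻¹ * (l * w * u - v) ^ 2 := by positivity
    have h' : (l * w)⁻¹ * (l * w * u - v) ^ 2 =
      l * (w * u ^ 2) + l⁻¹ * (w⁻¹ * v ^ 2) - 2 * (u * v) := by
      field_simp
      ring
    linarith
  have hint : ∀ {ι : Type} (S : Finset ι) (a : ι → ℂ) (x : ι → EuclideanSpace ℝ (Fin d)) (B : ℝ),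
    0 ≤ B → (∀ n ∈ S, ∑ m ∈ S, Real.exp (-‖x n - x m‖ ^ 2 / 4) ≤ B) →
    Integrable (fun ξ : EuclideanSpace ℝ (Fin d) => (1 + ‖ξ‖ ^ 2) ^ (-s) *
      ‖∑ n ∈ S, a n * Complex.exp (Complex.I * ((inner ℝ (x n) ξ : ℝ) : ℂ))‖ ^ 2) volume := by
    intro ι S a x B hB hx
    refine ⟨(hcw.mul (by fun_prop)).aestronglyMeasurable, ?_⟩
    rw [hasFiniteIntegral_iff_ofReal (ae_of_all _ fun ξ => by positivity)]
    exact (hW S a x B hB hx).trans_lt ENNReal.ofReal_lt_top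
  have h1 : Integrable fhat volume := by
    have h3 := hint (Finset.univ : Finset Unit) (fun _ => 1) (fun _ => 0) 1 (by simp) (by simp)
    simp at h3
    refine Integrable.mono' ((hA.add h3).div_const 2) hF.1.1 (ae_of_all _ fun ξ => ?_)
    have := amgm 1 _ ‖fhat ξ‖ 1 one_pos (hw ξ)
    simp only [Pi.add_apply, hwn]
    simpa using this
  set c0 : ℝ := (2 * Real.pi) ^ (-(d : ℝ) / 2) with hc0
  have hc0p : 0 < c0 := by positivity
  set X : ℝ := ∑ n ∈ S, ‖f (x n)‖ ^ 2 with hX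
  set A : ℝ := ∫ ξ, (1 + ‖ξ‖ ^ 2) ^ s * ‖fhat ξ‖ ^ 2 with hAdef
  set a : (Fin d → ℤ) → ℂ := fun n => (starRingEnd ℂ) (f (x n)) with ha
  set P : EuclideanSpace ℝ (Fin d) → ℂ := fun ξ =>
    ∑ n ∈ S, a n * Complex.exp (Complex.I * ((inner ℝ (x n) ξ : ℝ) : ℂ)) with hP
  have haX : ∑ n ∈ S, ‖a n‖ ^ 2 = X := by simp [ha, hX]
  have hPint : Integrable (fun ξ => (1 + ‖ξ‖ ^ 2) ^ (-s) * ‖P ξ‖ ^ 2) volume :=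
    hint S a x B hB.le hx
  have hPle : ∫ ξ, (1 + ‖ξ‖ ^ 2) ^ (-s) * ‖P ξ‖ ^ 2 ≤ D * (B * X) := by
    rw [integral_eq_lintegral_of_nonneg_ae (ae_of_all _ fun ξ => by positivity) hPint.1, ← haX]
    apply ENNReal.toReal_le_of_le_ofReal (by positivity)
    exact hW S a x B hB.le hx
  have hXc : (X : ℂ) = (c0 : ℂ) * ∫ ξ, P ξ * fhat ξ := by
    have e1 : ∀ n ∈ S, Integrable (fun ξ => a n * (Complex.exp (Complex.I * ((inner ℝ (x n) ξ : ℝ) : ℂ))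
        * fhat ξ)) volume := by
      intro n _
      apply Integrable.const_mul
      apply h1.bdd_mul (c := 1)
      · exact (by fun_prop : Continuous fun ξ : EuclideanSpace ℝ (Fin d) =>
          Complex.exp (Complex.I * ((inner ℝ (x n) ξ : ℝ) : ℂ))).aestronglyMeasurable
      · refine ae_of_all _ fun ξ => ?_
        rw [mul_comm, Complex.norm_exp_ofReal_mul_I]
    simp only [hP, Finset.sum_mul, mul_assoc]
    rw [integral_finsetSum _ e1, Finset.mul_sum, hX]
    push_cast
    refine Finset.sum_congr rfl fun n _ => ?_
    rw [integral_const_mul, ← Complex.conj_mul', ha]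
    simp only
    rw [mul_left_comm]
    congr 1
    exact aux_inv_s7 d f fhat hc h2 hF h1 (x n)
  have hl : 0 < c0 * D * B := by positivity
  have hX0 : 0 ≤ X := by positivity
  have main : X ≤ c0 * ((c0 * D * B * A + (c0 * D * B)⁻¹ * (D * (B * X))) / 2) := by
    calc X = ‖(X : ℂ)‖ := by rw [Complex.norm_real, Real.norm_of_nonneg hX0]
      _ = c0 * ‖∫ ξ, P ξ * fhat ξ‖ := by
        rw [hXc, norm_mul, Complex.norm_real, Real.norm_of_nonneg hc0p.le]
      _ ≤ c0 * ∫ ξ, ((c0 * D * B) * ((1 + ‖ξ‖ ^ 2) ^ s * ‖fhat ξ‖ ^ 2) +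
            (c0 * D * B)⁻¹ * ((1 + ‖ξ‖ ^ 2) ^ (-s) * ‖P ξ‖ ^ 2)) / 2 := by
        apply mul_le_mul_of_nonneg_left _ hc0p.le
        apply norm_integral_le_of_norm_le
        · exact ((hA.const_mul _).add (hPint.const_mul _)).div_const 2
        · refine ae_of_all _ fun ξ => ?_
          rw [norm_mul, mul_comm, hwn]
          exact amgm _ _ _ _ hl (hw ξ)
      _ = c0 * ((c0 * D * B * A + (c0 * D * B)⁻¹ *
            ∫ ξ, (1 + ‖ξ‖ ^ 2) ^ (-s) * ‖P ξ‖ ^ 2) / 2) := by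
        rw [integral_div, integral_add (hA.const_mul _) (hPint.const_mul _), integral_const_mul,
          integral_const_mul]
      _ ≤ _ := by gcongr
  have e2 : c0 * ((c0 * D * B * A + (c0 * D * B)⁻¹ * (D * (B * X))) / 2) =
      (c0 ^ 2 * D * B * A + X) / 2 := by
    field_simp
  linarith

/-- Given `s > d/2`, there is `C = C(s,d) > 0` such that for every `r > 0` and every
continuous `f ∈ L²(ℝ^d)` with `∫ (1+|ξ|²)^s |f̂(ξ)|² dξ < ∞`,
`(Σ_{n ∈ ℤ^d} (sup_{x ∈ Q_r(rn)} |f(x)|)²)^{1/2} ≤ C (1 + r^{-d/2}) (∫ (1+|ξ|²)^s |f̂(ξ)|² dξ)^{1/2}`. -/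
theorem statement7 (d : ℕ) (hd : 0 < d) (s : ℝ) (hs : (d : ℝ) / 2 < s) :
    ∃ C : ℝ, 0 < C ∧
      ∀ r : ℝ, 0 < r →
      ∀ f fhat : EuclideanSpace ℝ (Fin d) → ℂ,
        Continuous f → MemLp f 2 volume → IsL2Fourier d f fhat →
        Integrable (fun ξ => (1 + ‖ξ‖ ^ 2) ^ s * ‖fhat ξ‖ ^ 2) volume →
        (∑' n : Fin d → ℤ,
            (ENNReal.ofReal (⨆ x ∈ {x : EuclideanSpace ℝ (Fin d) | ∀ j, |x j - r * n j| ≤ r},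
              ‖f x‖)) ^ 2) ^ ((1 : ℝ) / 2)
          ≤ ENNReal.ofReal (C * (1 + r ^ (-(d : ℝ) / 2)) *
              Real.sqrt (∫ ξ, (1 + ‖ξ‖ ^ 2) ^ s * ‖fhat ξ‖ ^ 2)) := by
  obtain ⟨D, hD, hW⟩ := aux_weight d s hs
  set c0 : ℝ := (2 * Real.pi) ^ (-(d : ℝ) / 2) with hc0
  have hc0p : 0 < c0 := by positivity
  set K : ℝ := (Real.exp 3 * 4) ^ d with hK
  have hKp : 0 < K := by positivity
  refine ⟨c0 * Real.sqrt (D * K), by positivity, ?_⟩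
  intro r hr f fhat hc h2 hF hA
  have hmax : ∀ n : Fin d → ℤ, ∃ y : EuclideanSpace ℝ (Fin d), (∀ j, |y j - r * n j| ≤ r) ∧
      (⨆ x ∈ {x : EuclideanSpace ℝ (Fin d) | ∀ j, |x j - r * n j| ≤ r}, ‖f x‖) ≤ ‖f y‖ := by
    intro n
    have hcl : IsClosed {x : EuclideanSpace ℝ (Fin d) | ∀ j, |x j - r * n j| ≤ r} := by
      simp only [Set.setOf_forall]
      exact isClosed_iInter fun j => isClosed_le (by fun_prop) continuous_const
    have hbd : Bornology.IsBounded {x : EuclideanSpace ℝ (Fin d) | ∀ j, |x j - r * n j| ≤ r} := by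
      rw [isBounded_iff_forall_norm_le]
      refine ⟨∑ j : Fin d, (r + |r * n j|), fun y hy => ?_⟩
      calc ‖y‖ ≤ ∑ j, ‖y j‖ := by
            rw [EuclideanSpace.norm_eq]
            apply Real.sqrt_le_iff.2
            refine ⟨by positivity, ?_⟩
            exact Finset.sum_sq_le_sq_sum_of_nonneg (fun j _ => norm_nonneg _)
        _ ≤ _ := by
            refine Finset.sum_le_sum fun j _ => ?_
            have h3 := hy j
            have h4 := abs_sub_abs_le_abs_sub (y j) (r * n j)
            rw [Real.norm_eq_abs]
            linarith
    have hcomp := Metric.isCompact_of_isClosed_isBounded hcl hbd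
    obtain ⟨y, hy, hmx⟩ := hcomp.exists_isMaxOn
      ⟨WithLp.toLp 2 (fun j => r * n j), fun j => by simpa using hr.le⟩ hc.norm.continuousOn
    refine ⟨y, hy, ?_⟩
    refine Real.iSup_le (fun z => Real.iSup_le (fun hz => ?_) (norm_nonneg _)) (norm_nonneg _)
    exact hmx hz
  choose x hx hsup using hmax
  set ρ : ℝ := min r 1 with hρ
  have hρ0 : 0 < ρ := lt_min hr one_pos
  have hB : ∀ S : Finset (Fin d → ℤ), ∀ n ∈ S, ∑ m ∈ S, Real.exp (-‖x n - x m‖ ^ 2 / 4) ≤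
      K * (1 + r ^ (-(d : ℝ))) := by
    intro S n _
    refine (aux_count d r ρ hρ0 (min_le_right _ _) (min_le_left _ _) x hx S n).trans ?_
    rw [show Real.exp 3 * (4 / ρ) = Real.exp 3 * 4 * ρ⁻¹ by ring, mul_pow]
    apply mul_le_mul_of_nonneg_left _ hKp.le
    rw [Real.rpow_neg hr.le, Real.rpow_natCast]
    rcases le_total r 1 with h | h
    · rw [hρ, min_eq_left h, inv_pow]; linarith
    · rw [hρ, min_eq_right h]
      have : 0 ≤ (r ^ d)⁻¹ := by positivity
      simpa using this
  set A : ℝ := ∫ ξ, (1 + ‖ξ‖ ^ 2) ^ s * ‖fhat ξ‖ ^ 2 with hAdef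
  have hA0 : 0 ≤ A := integral_nonneg fun ξ => by positivity
  have hfin : (∑' n : Fin d → ℤ,
            (ENNReal.ofReal (⨆ x ∈ {x : EuclideanSpace ℝ (Fin d) | ∀ j, |x j - r * n j| ≤ r},
              ‖f x‖)) ^ 2) ≤ ENNReal.ofReal (c0 ^ 2 * D * (K * (1 + r ^ (-(d : ℝ)))) * A) := by
    apply ENNReal.summable.tsum_le_of_sum_le
    intro S
    calc _ ≤ ∑ n ∈ S, ENNReal.ofReal (‖f (x n)‖ ^ 2) := by
          refine Finset.sum_le_sum fun n _ => ?_
          rw [ENNReal.ofReal_pow (norm_nonneg _)]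
          gcongr
          exact hsup n
      _ = ENNReal.ofReal (∑ n ∈ S, ‖f (x n)‖ ^ 2) :=
          (ENNReal.ofReal_sum_of_nonneg fun _ _ => by positivity).symm
      _ ≤ _ := by
          apply ENNReal.ofReal_le_ofReal
          exact aux_core d s D _ hD (by positivity) f fhat hc h2 hF hA hW S x (hB S)
  calc _ ≤ (ENNReal.ofReal (c0 ^ 2 * D * (K * (1 + r ^ (-(d : ℝ)))) * A)) ^ ((1:ℝ)/2) := by
        gcongr
    _ = ENNReal.ofReal (Real.sqrt (c0 ^ 2 * D * (K * (1 + r ^ (-(d : ℝ)))) * A)) := by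
        rw [ENNReal.ofReal_rpow_of_nonneg (by positivity) (by norm_num), Real.sqrt_eq_rpow]
    _ ≤ _ := by
        apply ENNReal.ofReal_le_ofReal
        rw [Real.sqrt_le_iff]
        refine ⟨by positivity, ?_⟩
        rw [mul_pow, mul_pow, mul_pow, Real.sq_sqrt hA0, Real.sq_sqrt (by positivity)]
        have h5 : 1 + r ^ (-(d : ℝ)) ≤ (1 + r ^ (-(d : ℝ) / 2)) ^ 2 := by
          have h6 : r ^ (-(d : ℝ)) = (r ^ (-(d : ℝ) / 2)) ^ 2 := by
            rw [← Real.rpow_natCast, ← Real.rpow_mul hr.le]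
            congr 1
            push_cast
            ring
          rw [h6]
          have : 0 ≤ r ^ (-(d : ℝ) / 2) := by positivity
          nlinarith
        calc _ = c0 ^ 2 * (D * K) * (1 + r ^ (-(d : ℝ))) * A := by ring
          _ ≤ _ := by gcongr
end
end

section
/- There is a constant C = C(d) > 0 such that for every u₀ ∈ L²(ℝ^d), every T > 0 and every r > 0, the heat solution u with initial datum u₀ satisfies (Σ_{n∈ℤ^d} (sup_{x∈Q_r(rn)} |u(T,x)|)² )^{1/2} ≤ C (1 + (T r^{-2})^{d/4}) T^{-d/4} ‖u₀‖. -/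
open MeasureTheory Filter Topology Metric ENNReal NNReal

noncomputable section

lemma aux_nat (b : ℝ) (hb : 0 < b) :
    ∑' n : ℕ, ENNReal.ofReal (Real.exp (-b * (max ((n:ℝ) - 2) 0) ^ 2))
      ≤ ENNReal.ofReal (3 + Real.sqrt (Real.pi / b)) := by
  apply ENNReal.tsum_le_of_sum_range_le
  intro N
  rw [← ENNReal.ofReal_sum_of_nonneg (fun _ _ => (Real.exp_pos _).le)]
  apply ENNReal.ofReal_le_ofReal
  have h1 : ∑ n ∈ Finset.range N, Real.exp (-b * (max ((n:ℝ) - 2) 0) ^ 2)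
      ≤ ∑ n ∈ Finset.range (3 + N), Real.exp (-b * (max ((n:ℝ) - 2) 0) ^ 2) :=
    Finset.sum_le_sum_of_subset_of_nonneg (Finset.range_mono (by omega))
      (fun _ _ _ => (Real.exp_pos _).le)
  refine h1.trans ?_
  rw [Finset.sum_range_add]
  apply add_le_add
  · have : ∑ n ∈ Finset.range 3, Real.exp (-b * (max ((n:ℝ) - 2) 0) ^ 2)
      ≤ ∑ n ∈ Finset.range 3, (1:ℝ) := by
      apply Finset.sum_le_sum
      intro i _
      rw [Real.exp_le_one_iff]
      nlinarith [sq_nonneg (max ((i:ℝ) - 2) 0)]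
    simpa using this
  · have hanti : AntitoneOn (fun x : ℝ => Real.exp (-b * x ^ 2)) (Set.Icc (0:ℝ) (0 + (N:ℕ))) := by
      intro x hx y hy hxy
      apply Real.exp_le_exp.2
      have : x ^ 2 ≤ y ^ 2 := by
        have := hx.1
        gcongr
      nlinarith
    have h2 := hanti.sum_le_integral
    have h3 : ∑ x ∈ Finset.range N, Real.exp (-b * (max (((3 + x : ℕ):ℝ) - 2) 0) ^ 2)
        = ∑ i ∈ Finset.range N, Real.exp (-b * (0 + ((i + 1 : ℕ) : ℝ)) ^ 2) := by
      apply Finset.sum_congr rfl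
      intro i _
      have : max (((3 + i : ℕ):ℝ) - 2) 0 = 0 + ((i + 1 : ℕ) : ℝ) := by
        push_cast
        rw [max_eq_left (by have : (0:ℝ) ≤ i := by positivity
                            linarith)]
        ring
      rw [this]
    rw [h3]
    refine h2.trans ?_
    rw [intervalIntegral.integral_of_le (by positivity), ← integral_gaussian b]
    exact setIntegral_le_integral (integrable_exp_neg_mul_sq hb)
      (Eventually.of_forall fun x => (Real.exp_pos _).le)

lemma aux_int (b : ℝ) (hb : 0 < b) (q : ℝ) :
    ∑' k : ℤ, ENNReal.ofReal (Real.exp (-b * (max (|(k:ℝ) - q| - 1) 0) ^ 2))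
      ≤ ENNReal.ofReal (6 + 2 * Real.sqrt (Real.pi / b)) := by
  have key : ∀ (x y : ℝ), y ≤ x →
      ENNReal.ofReal (Real.exp (-b * (max x 0) ^ 2)) ≤
      ENNReal.ofReal (Real.exp (-b * (max y 0) ^ 2)) := by
    intro x y h
    apply ENNReal.ofReal_le_ofReal
    apply Real.exp_le_exp.2
    have : (max y 0) ^ 2 ≤ (max x 0) ^ 2 := by gcongr
    nlinarith
  have hm1 := Int.floor_le q
  have hm2 := Int.lt_floor_add_one q
  rw [← (Equiv.addRight ⌊q⌋).tsum_eq, tsum_of_nat_of_neg_add_one ENNReal.summable ENNReal.summable]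
  have : ENNReal.ofReal (6 + 2 * Real.sqrt (Real.pi / b)) =
      ENNReal.ofReal (3 + Real.sqrt (Real.pi / b)) + ENNReal.ofReal (3 + Real.sqrt (Real.pi / b)) := by
    rw [← ENNReal.ofReal_add (by positivity) (by positivity)]
    congr 1; ring
  rw [this]
  refine add_le_add ?_ ?_
  · refine le_trans (ENNReal.tsum_le_tsum fun n => ?_) (aux_nat b hb)
    apply key
    simp only [Equiv.coe_addRight]
    push_cast
    linarith [le_abs_self ((n:ℝ) + ⌊q⌋ - q)]
  · refine le_trans (ENNReal.tsum_le_tsum fun n => ?_) (aux_nat b hb)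
    apply key
    simp only [Equiv.coe_addRight]
    push_cast
    linarith [neg_le_abs (-((n:ℝ)+1) + ⌊q⌋ - q)]

lemma aux_pi (d : ℕ) (f : Fin d → ℤ → ℝ≥0∞) (B : ℝ≥0∞) (hB : ∀ j, ∑' k, f j k ≤ B) :
    ∑' n : Fin d → ℤ, ∏ j, f j (n j) ≤ B ^ d := by
  classical
  rw [ENNReal.tsum_eq_iSup_sum]
  apply iSup_le
  intro s
  have h1 : s ⊆ Fintype.piFinset (fun j => s.image (fun n => n j)) := by
    intro n hn
    rw [Fintype.mem_piFinset]
    intro j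
    exact Finset.mem_image_of_mem _ hn
  refine (Finset.sum_le_sum_of_subset h1).trans ?_
  rw [← Finset.prod_univ_sum]
  calc _ ≤ ∏ j : Fin d, B := Finset.prod_le_prod' fun j _ => (ENNReal.sum_le_tsum _).trans (hB j)
    _ = B ^ d := by simp

/-- the weight -/
def wgt (d : ℕ) (b r : ℝ) (n : Fin d → ℤ) (y : EuclideanSpace ℝ (Fin d)) : ℝ≥0∞ :=
  ∏ j, ENNReal.ofReal (Real.exp (-b * (max (|(n j:ℝ) - y j / r| - 1) 0) ^ 2))

lemma wgt_meas (d : ℕ) (b r : ℝ) (n : Fin d → ℤ) : Measurable (wgt d b r n) := by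
  unfold wgt
  fun_prop

lemma wgt_le_one (d : ℕ) (b r : ℝ) (hb : 0 < b) (n : Fin d → ℤ) (y) : wgt d b r n y ≤ 1 := by
  unfold wgt
  apply Finset.prod_le_one'
  intro j _
  rw [ENNReal.ofReal_le_one, Real.exp_le_one_iff]
  nlinarith [sq_nonneg (max (|(n j:ℝ) - y j / r| - 1) 0)]

lemma exp_le_wgt (d : ℕ) (T r : ℝ) (hT : 0 < T) (hr : 0 < r) (n : Fin d → ℤ)
    (x y : EuclideanSpace ℝ (Fin d)) (hx : ∀ j, |x j - r * n j| ≤ r) :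
    ENNReal.ofReal (Real.exp (-‖x - y‖ ^ 2 / (4 * T))) ≤ wgt d (r ^ 2 / (4 * T)) r n y := by
  unfold wgt
  rw [← ENNReal.ofReal_prod_of_nonneg (fun _ _ => (Real.exp_pos _).le), ← Real.exp_sum]
  apply ENNReal.ofReal_le_ofReal
  apply Real.exp_le_exp.2
  rw [EuclideanSpace.norm_sq_eq, neg_div, Finset.sum_div, ← Finset.sum_neg_distrib]
  apply Finset.sum_le_sum
  intro j _
  have h : max (|(n j:ℝ) - y j / r| - 1) 0 ≤ |x j - y j| / r := by
    apply max_le _ (by positivity)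
    rw [le_div_iff₀ hr]
    have e : |(n j:ℝ) - y j / r| * r = |r * n j - y j| := by
      rw [← abs_of_pos hr, ← abs_mul, abs_of_pos hr]
      congr 1; field_simp
    rw [sub_mul, e]
    have := abs_sub_le (r * n j) (x j) (y j)
    have h2 := hx j
    rw [abs_sub_comm] at h2
    linarith
  have h2 : (max (|(n j:ℝ) - y j / r| - 1) 0) ^ 2 ≤ (|x j - y j| / r) ^ 2 := by
    gcongr
  have h3 : r ^ 2 / (4 * T) * (max (|(n j:ℝ) - y j / r| - 1) 0) ^ 2 ≤ 
     r ^ 2 / (4 * T) * (|x j - y j| / r) ^ 2 := by gcongr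
  have h4 : r ^ 2 / (4 * T) * (|x j - y j| / r) ^ 2 = |x j - y j| ^ 2 / (4 * T) := by
    field_simp
  rw [h4] at h3
  simp only [PiLp.sub_apply, Real.norm_eq_abs]
  linarith

lemma gauss_lint (d : ℕ) (T : ℝ) (hT : 0 < T) (x : EuclideanSpace ℝ (Fin d)) :
    ∫⁻ y, ENNReal.ofReal (Real.exp (-‖x - y‖ ^ 2 / (4 * T)))
      = ENNReal.ofReal ((4 * Real.pi * T) ^ ((d:ℝ) / 2)) := by
  have h0 : ∀ v : EuclideanSpace ℝ (Fin d), Real.exp (-‖v‖ ^ 2 / (4 * T)) =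
      Real.exp (-(1 / (4 * T)) * ‖v‖ ^ 2) := by
    intro v; congr 1; ring
  rw [lintegral_sub_left_eq_self (fun v : EuclideanSpace ℝ (Fin d) => ENNReal.ofReal (Real.exp (-‖v‖ ^ 2 / (4 * T)))) x]
  simp_rw [h0]
  have hb : 0 < 1 / (4 * T) := by positivity
  have hi := GaussianFourier.integral_rexp_neg_mul_sq_norm (V := EuclideanSpace ℝ (Fin d)) hb
  have hint : Integrable (fun v : EuclideanSpace ℝ (Fin d) => Real.exp (-(1 / (4 * T)) * ‖v‖ ^ 2)) := by
    by_contra hc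
    rw [integral_undef hc] at hi
    have : 0 < (Real.pi / (1 / (4 * T))) ^ ((Module.finrank ℝ (EuclideanSpace ℝ (Fin d)) : ℝ) / 2) := by
      have := Real.pi_pos
      positivity
    linarith
  rw [← ofReal_integral_eq_lintegral_ofReal hint (Eventually.of_forall fun x => (Real.exp_pos _).le), hi]
  rw [finrank_euclideanSpace_fin]
  congr 2
  field_simp

lemma heat_bd (d : ℕ) (T r : ℝ) (hT : 0 < T) (hr : 0 < r) (n : Fin d → ℤ)
    (u : EuclideanSpace ℝ (Fin d) → ℝ) (hu : MemLp u 2 volume)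
    (x : EuclideanSpace ℝ (Fin d)) (hx : ∀ j, |x j - r * n j| ≤ r) :
    ENNReal.ofReal |heatSol d u T x| ^ 2 ≤ ENNReal.ofReal ((4 * Real.pi * T) ^ (-(d:ℝ) / 2)) *
      ∫⁻ y, wgt d (r ^ 2 / (4 * T)) r n y * ‖u y‖ₑ ^ 2 := by
  have hpi := Real.pi_pos
  set P := (4 * Real.pi * T) with hP
  have hPpos : 0 < P := by positivity
  set E : EuclideanSpace ℝ (Fin d) → ℝ≥0∞ := fun y => ENNReal.ofReal (Real.exp (-‖x - y‖ ^ 2 / (4 * T))) with hE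
  have hEm : Measurable E := by
    rw [hE]
    fun_prop
  have hsq : ∀ a : ℝ≥0∞, (a ^ ((1:ℝ) / 2)) ^ (2:ℝ) = a := by
    intro a
    rw [← ENNReal.rpow_mul]; norm_num
  have h1 : ‖∫ y, Real.exp (-‖x - y‖ ^ 2 / (4 * T)) * u y‖ₑ ≤
      ∫⁻ y, E y * ‖u y‖ₑ := by
    refine (enorm_integral_le_lintegral_enorm _).trans (le_of_eq ?_)
    congr 1; ext y
    rw [enorm_mul, Real.enorm_eq_ofReal (Real.exp_pos _).le]
  have h2 : ∫⁻ y, E y * ‖u y‖ₑ ≤ (∫⁻ y, E y) ^ ((1:ℝ) / 2) * (∫⁻ y, E y * ‖u y‖ₑ ^ 2) ^ ((1:ℝ) / 2) := by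
    have := ENNReal.lintegral_mul_le_Lp_mul_Lq (volume : Measure (EuclideanSpace ℝ (Fin d)))
      Real.HolderConjugate.two_two (f := fun y => (E y) ^ ((1:ℝ) / 2))
      (g := fun y => (E y) ^ ((1:ℝ) / 2) * ‖u y‖ₑ) (by fun_prop)
      ((by fun_prop : AEMeasurable (fun y => (E y) ^ ((1:ℝ) / 2))).mul hu.1.enorm)
    simp only [Pi.mul_apply, ENNReal.mul_rpow_of_nonneg _ _ (zero_le_two : (0:ℝ) ≤ 2), hsq] at this
    refine le_trans (le_of_eq ?_) (this.trans (le_of_eq ?_))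
    · congr 1; ext y
      rw [← mul_assoc, ← ENNReal.rpow_add_of_nonneg _ _ (by norm_num) (by norm_num)]
      norm_num
    · simp
  rw [gauss_lint d T hT x] at h2
  have h3 : ∫⁻ y, E y * ‖u y‖ₑ ^ 2 ≤ ∫⁻ y, wgt d (r ^ 2 / (4 * T)) r n y * ‖u y‖ₑ ^ 2 := by
    apply lintegral_mono
    intro y
    dsimp only
    gcongr
    exact exp_le_wgt d T r hT hr n x y hx
  have h4 : ENNReal.ofReal |heatSol d u T x| = ENNReal.ofReal (P ^ (-(d:ℝ) / 2)) *
      ‖∫ y, Real.exp (-‖x - y‖ ^ 2 / (4 * T)) * u y‖ₑ := by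
    rw [← Real.enorm_eq_ofReal_abs, heatSol, enorm_mul, Real.enorm_eq_ofReal (by positivity)]
  rw [h4, mul_pow]
  have h5 : ∀ a : ℝ≥0∞, (a ^ ((1:ℝ) / 2)) ^ 2 = a := by
    intro a
    have := hsq a
    rwa [ENNReal.rpow_two] at this
  calc _ ≤ ENNReal.ofReal (P ^ (-(d:ℝ) / 2)) ^ 2 * (ENNReal.ofReal (P ^ ((d:ℝ) / 2)) ^ ((1:ℝ) / 2) *
      (∫⁻ y, E y * ‖u y‖ₑ ^ 2) ^ ((1:ℝ) / 2)) ^ 2 := by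
        gcongr
        exact h1.trans h2
    _ = ENNReal.ofReal (P ^ (-(d:ℝ) / 2)) * (∫⁻ y, E y * ‖u y‖ₑ ^ 2) := by
        rw [mul_pow, h5, h5, ← mul_assoc]
        congr 1
        rw [← ENNReal.ofReal_pow (by positivity), ← ENNReal.ofReal_mul (by positivity)]
        congr 1
        rw [pow_two, mul_assoc, ← Real.rpow_add hPpos]
        rw [show -(d:ℝ) / 2 + (d:ℝ) / 2 = 0 by ring, Real.rpow_zero, mul_one]
    _ ≤ _ := by gcongr

/-- There is `C = C(d) > 0` such that for every `u₀ ∈ L²(ℝ^d)`, `T > 0` and `r > 0`,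
`(Σ_{n ∈ ℤ^d} (sup_{x ∈ Q_r(rn)} |u(T,x)|)²)^{1/2} ≤ C (1 + (T r^{-2})^{d/4}) T^{-d/4} ‖u₀‖`. -/
theorem statement8 (d : ℕ) (hd : 0 < d) :
    ∃ C : ℝ, 0 < C ∧
      ∀ u₀ : EuclideanSpace ℝ (Fin d) → ℝ, MemLp u₀ 2 volume →
      ∀ T r : ℝ, 0 < T → 0 < r →
        (∑' n : Fin d → ℤ,
            (ENNReal.ofReal (⨆ x ∈ {x : EuclideanSpace ℝ (Fin d) | ∀ j, |x j - r * n j| ≤ r},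
              |heatSol d u₀ T x|)) ^ 2) ^ ((1 : ℝ) / 2)
          ≤ ENNReal.ofReal
              (C * (1 + (T * r ^ (-(2 : ℝ))) ^ ((d : ℝ) / 4)) * T ^ (-(d : ℝ) / 4)
                * l2norm d u₀) := by
  refine ⟨4 ^ d, by positivity, ?_⟩
  intro u hu T r hT hr
  have hpi := Real.pi_pos
  have hb : 0 < r ^ 2 / (4 * T) := by positivity
  have hL : ∫⁻ y, ‖u y‖ₑ ^ 2 = ENNReal.ofReal (l2norm d u) ^ 2 := by
    rw [l2norm, ENNReal.ofReal_toReal hu.2.ne,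
      eLpNorm_eq_lintegral_rpow_enorm_toReal (by norm_num) (by norm_num)]
    rw [← ENNReal.rpow_two, ← ENNReal.rpow_mul]
    simp
  have hum : AEMeasurable (fun y => ‖u y‖ₑ ^ 2) volume := hu.1.enorm.pow_const 2
  set K := ENNReal.ofReal ((4 * Real.pi * T) ^ (-(d:ℝ) / 2)) with hK
  set A : (Fin d → ℤ) → ℝ≥0∞ := fun n => K * ∫⁻ y, wgt d (r ^ 2 / (4 * T)) r n y * ‖u y‖ₑ ^ 2 with hA
  have hAfin : ∀ n, A n ≠ ∞ := by
    intro n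
    apply ENNReal.mul_ne_top ENNReal.ofReal_ne_top
    refine ne_top_of_le_ne_top ?_ (lintegral_mono (g := fun y => ‖u y‖ₑ ^ 2) fun y => ?_)
    · rw [hL]; exact ENNReal.pow_ne_top ENNReal.ofReal_ne_top
    · exact mul_le_of_le_one_left zero_le (wgt_le_one d _ r hb n y)
  have hterm : ∀ n : Fin d → ℤ,
      (ENNReal.ofReal (⨆ x ∈ {x : EuclideanSpace ℝ (Fin d) | ∀ j, |x j - r * n j| ≤ r},
              |heatSol d u T x|)) ^ 2 ≤ A n := by
    intro n
    have : ENNReal.ofReal (⨆ x ∈ {x : EuclideanSpace ℝ (Fin d) | ∀ j, |x j - r * n j| ≤ r},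
              |heatSol d u T x|) ≤ A n ^ ((1:ℝ) / 2) := by
      have hf : A n ^ ((1:ℝ) / 2) ≠ ∞ := ENNReal.rpow_ne_top_of_nonneg (by norm_num) (hAfin n)
      apply ENNReal.ofReal_le_of_le_toReal
      refine Real.iSup_le (fun x => Real.iSup_le (fun hx => ?_) ENNReal.toReal_nonneg) ENNReal.toReal_nonneg
      rw [← ENNReal.ofReal_le_iff_le_toReal hf]
      have h := heat_bd d T r hT hr n u hu x hx
      rw [← ENNReal.rpow_two] at h
      have h6 := ENNReal.rpow_le_rpow h (by norm_num : (0:ℝ) ≤ 1 / 2)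
      rwa [← ENNReal.rpow_mul, show (2:ℝ) * (1 / 2) = 1 by norm_num, ENNReal.rpow_one] at h6
    calc _ ≤ (A n ^ ((1:ℝ) / 2)) ^ 2 := by gcongr
      _ = A n := by rw [← ENNReal.rpow_two, ← ENNReal.rpow_mul]; norm_num
  have hsum : ∑' n, A n ≤ K * (ENNReal.ofReal (6 + 2 * Real.sqrt (Real.pi / (r ^ 2 / (4 * T)))) ^ d *
      ENNReal.ofReal (l2norm d u) ^ 2) := by
    rw [hA, ENNReal.tsum_mul_left, ← lintegral_tsum (f := fun n y => wgt d (r ^ 2 / (4 * T)) r n y * ‖u y‖ₑ ^ 2)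
      (fun n => (wgt_meas d _ r n).aemeasurable.mul hum), ← hL]
    gcongr
    rw [← lintegral_const_mul'' _ hum]
    apply lintegral_mono
    intro y
    dsimp only
    rw [ENNReal.tsum_mul_right]
    gcongr
    exact aux_pi d _ _ (fun j => aux_int _ hb (y j / r))
  have hl : 0 ≤ l2norm d u := ENNReal.toReal_nonneg
  set a := Real.sqrt (T / r ^ 2) with ha
  have ha0 : 0 ≤ a := Real.sqrt_nonneg _
  have hs : Real.sqrt (Real.pi / (r ^ 2 / (4 * T))) ≤ 4 * a := by
    rw [show Real.pi / (r ^ 2 / (4 * T)) = (4 * Real.pi) * (T / r ^ 2) by field_simp,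
      Real.sqrt_mul (by positivity)]
    gcongr
    rw [Real.sqrt_le_left (by norm_num)]
    nlinarith [Real.pi_le_four]
  have hs2 : (6 + 2 * Real.sqrt (Real.pi / (r ^ 2 / (4 * T)))) ^ d ≤ 16 ^ d * (max 1 a) ^ d := by
    rw [← mul_pow]
    gcongr
    nlinarith [le_max_left 1 a, le_max_right 1 a]
  have hp : (T * r ^ (-(2:ℝ))) ^ ((d:ℝ) / 4) = a ^ ((d:ℝ) / 2) := by
    rw [ha, Real.sqrt_eq_rpow, ← Real.rpow_mul (by positivity), Real.rpow_neg hr.le, Real.rpow_two, div_eq_mul_inv]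
    congr 1; ring
  have hmx : (max 1 a) ^ d ≤ (1 + a ^ ((d:ℝ) / 2)) ^ 2 := by
    have h0 : 0 ≤ a ^ ((d:ℝ) / 2) := by positivity
    rcases le_total 1 a with h | h
    · rw [max_eq_right h]
      have : a ^ d = (a ^ ((d:ℝ) / 2)) ^ 2 := by
        rw [← Real.rpow_natCast, ← Real.rpow_natCast, ← Real.rpow_mul ha0]
        congr 1; push_cast; ring
      rw [this]; nlinarith
    · rw [max_eq_left h, one_pow]; nlinarith
  have hKb : (4 * Real.pi * T) ^ (-(d:ℝ) / 2) ≤ (T ^ (-(d:ℝ) / 4)) ^ 2 := by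
    have : (T ^ (-(d:ℝ) / 4)) ^ 2 = T ^ (-(d:ℝ) / 2) := by
      rw [← Real.rpow_natCast, ← Real.rpow_mul hT.le]
      congr 1; push_cast; ring
    rw [this]
    apply Real.rpow_le_rpow_of_nonpos hT
    · nlinarith [Real.pi_gt_three]
    · have : (0:ℝ) ≤ d := by positivity
      linarith
  have hfin : (∑' n : Fin d → ℤ,
            (ENNReal.ofReal (⨆ x ∈ {x : EuclideanSpace ℝ (Fin d) | ∀ j, |x j - r * n j| ≤ r},
              |heatSol d u T x|)) ^ 2) ≤ ENNReal.ofReal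
              (4 ^ d * (1 + (T * r ^ (-(2 : ℝ))) ^ ((d : ℝ) / 4)) * T ^ (-(d : ℝ) / 4)
                * l2norm d u) ^ 2 := by
    refine (ENNReal.tsum_le_tsum hterm).trans (hsum.trans ?_)
    rw [hp, hK, ← ENNReal.ofReal_pow (by positivity), ← ENNReal.ofReal_pow (by positivity),
      ← ENNReal.ofReal_mul (by positivity), ← ENNReal.ofReal_mul (by positivity),
      ← ENNReal.ofReal_pow (by positivity)]
    apply ENNReal.ofReal_le_ofReal
    calc _ ≤ (T ^ (-(d:ℝ) / 4)) ^ 2 * ((16 ^ d * (1 + a ^ ((d:ℝ) / 2)) ^ 2) * l2norm d u ^ 2) := by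
          gcongr
          exact hs2.trans (by gcongr)
      _ = _ := by
          rw [show (16:ℝ) = 4 ^ 2 by norm_num, ← pow_mul, mul_comm 2 d, pow_mul]
          ring
  calc _ ≤ (ENNReal.ofReal
              (4 ^ d * (1 + (T * r ^ (-(2 : ℝ))) ^ ((d : ℝ) / 4)) * T ^ (-(d : ℝ) / 4)
                * l2norm d u) ^ 2) ^ ((1 : ℝ) / 2) := by gcongr
    _ = _ := by rw [← ENNReal.rpow_two, ← ENNReal.rpow_mul]; norm_num
end
end
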